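/- arXiv:1707.02628 — 2 statements merged into one kernel-verified Lean document; each statement's English description precedes it below -/
import Mathlib

section
/- There exists a real number x such that for every integer b ≥ 2 the sequence ({b^j x})_{j≥0} is uniformly distributed in [0,1) (so x is absolutely normal), and moreover for every integer b ≥ 2 there is a number N_0(b) such that for all N ≥ N_0(b) one has D_N(({b^j x})_{j≥0}) ≤ 3433 · b / √N. -/
open scoped Classical

/-- The discrepancy of the first `N` elements of a sequence of reals:
`D_N((x_j)) = sup_{0 ≤ α₁ < α₂ ≤ 1} |#{j < N : α₁ ≤ x_j < α₂}/N − (α₂ − α₁)|`. -/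
noncomputable def disc (N : ℕ) (x : ℕ → ℝ) : ℝ :=
  ⨆ p : {p : ℝ × ℝ // 0 ≤ p.1 ∧ p.1 < p.2 ∧ p.2 ≤ 1},
    |(((Finset.range N).filter fun j => p.1.1 ≤ x j ∧ x j < p.1.2).card : ℝ) / N -
      (p.1.2 - p.1.1)|

/-!
Cut a word of `H` random base-`b` digits into disjoint blocks of length `k`. The blocks are
independent, so a walk of centred indicators over them satisfies a fourth-moment maximal
inequality. Chaining over the block lengths `k ≤ log_b H` makes all prefixes of the word, and all
intervals with endpoints in `b ^ (-k) ℤ`, deviate by at most `O(b √H)` simultaneously, except for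
a fraction at most `1 / (24 b ^ 2)` of the words. The point `x` is the intersection of nested
dyadic cells of length `2 ^ (-4 ^ i)`: since `∑ b ^ (-2) < 1` over `b ≥ 2`, inside each cell there
is one of the next generation which avoids the exceptional words for all bases `b ≤ i + 2` at once.
In each base the digits determined by consecutive generations form blocks whose lengths grow by a
factor `4`, so the deviations `O(b √H)` of the blocks add up geometrically to `O(b √N)`.
-/

section

open Finset

/-! ### Digit blocks of words -/

/-- The number written by the `k` consecutive base-`b` digits of the `H`-digit word `a` that start
at position `j`. Position `0` is the most significant digit, and `a` is identified with a number
below `b ^ H`; only the case `j + k ≤ H` is meaningful. -/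
def digitBlock (b H a j k : ℕ) : ℕ :=
  a / b ^ (H - j - k) % b ^ k

theorem digitBlock_lt {b : ℕ} (hb : 0 < b) (H a j k : ℕ) : digitBlock b H a j k < b ^ k :=
  Nat.mod_lt _ (pow_pos hb k)

theorem digitBlock_succ_div {b H a j k : ℕ} (h : j + k + 1 ≤ H) :
    digitBlock b H a j (k + 1) / b = digitBlock b H a j k := by
  have hexp : H - j - k = H - j - (k + 1) + 1 := by lia
  simp only [digitBlock]
  rw [pow_succ', Nat.mod_mul_right_div_self, Nat.div_div_eq_div_mul, ← pow_succ, ← hexp]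

theorem digitBlock_mul_pow_add {b H j k : ℕ} (hb : 0 < b) (r y c : ℕ) (h : j + k ≤ H) :
    digitBlock b (r + H) (y * b ^ H + c) (r + j) k = digitBlock b H c j k := by
  have hexp : r + H - (r + j) - k = H - j - k := by lia
  have hpow : b ^ H = b ^ (H - j - k) * (b ^ k * b ^ j) := by
    rw [← pow_add, ← pow_add]; congr 1; lia
  have hsum : y * b ^ H + c = b ^ (H - j - k) * (b ^ k * (b ^ j * y)) + c := by rw [hpow]; ring
  rw [digitBlock, digitBlock, hexp, hsum, Nat.mul_add_div (pow_pos hb _), Nat.mul_add_mod]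

theorem digitBlock_zero_mul_pow_add {b H k y c : ℕ} (hy : y < b ^ k) (hc : c < b ^ H) :
    digitBlock b (k + H) (y * b ^ H + c) 0 k = y := by
  have hexp : k + H - 0 - k = H := by lia
  rw [digitBlock, hexp, mul_comm, Nat.mul_add_div (by lia), Nat.div_eq_of_lt hc, add_zero,
    Nat.mod_eq_of_lt hy]

theorem card_filter_range_mul (A B : ℕ) (P : ℕ → Prop) [DecidablePred P] :
    #{a ∈ range (A * B) | P a} = ∑ y ∈ range A, #{c ∈ range B | P (y * B + c)} := by
  simp only [card_filter]
  induction A with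
  | zero => simp
  | succ A ih => rw [Nat.succ_mul, sum_range_add, ih, sum_range_succ]

/-- The value at time `N` of the walk with increments `X w`, where `w` runs over the consecutive
length-`k` digit blocks of the `H`-digit word `a`, starting at position `r`. -/
def blockSum (b H a r k : ℕ) (X : ℕ → ℝ) (N : ℕ) : ℝ :=
  ∑ i ∈ range N, X (digitBlock b H a (r + k * i) k)

theorem blockSum_mul_pow_add {b H j k N : ℕ} (hb : 0 < b) (r y c : ℕ) (X : ℕ → ℝ)
    (h : j + k * N ≤ H) :
    blockSum b (r + H) (y * b ^ H + c) (r + j) k X N = blockSum b H c j k X N := by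
  refine sum_congr rfl fun i hi => ?_
  have hi : k * (i + 1) ≤ k * N := Nat.mul_le_mul_left k (mem_range.1 hi)
  rw [add_assoc, digitBlock_mul_pow_add hb r y c (by lia)]

theorem blockSum_zero_mul_pow_add_succ {b H k y c N : ℕ} (hb : 0 < b) (X : ℕ → ℝ)
    (hy : y < b ^ k) (hc : c < b ^ H) (h : k * N ≤ H) :
    blockSum b (k + H) (y * b ^ H + c) 0 k X (N + 1) = X y + blockSum b H c 0 k X N := by
  rw [blockSum, sum_range_succ', add_comm]
  congr 1
  · simp only [mul_zero, add_zero, digitBlock_zero_mul_pow_add hy hc]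
  · rw [← blockSum_mul_pow_add hb k y c X (by simpa using h)]
    refine sum_congr rfl fun i _ => ?_
    ring_nf

theorem card_exists_blockSum_mem_succ_le {b : ℕ} (hb : 0 < b) (k h m : ℕ) (X : ℕ → ℝ)
    {E : Set ℝ} {s : ℝ} (hs : s ∉ E) :
    #{a ∈ range (b ^ (k * (m + 1) + h)) |
        ∃ N ≤ m + 1, s + blockSum b (k * (m + 1) + h) a 0 k X N ∈ E} ≤
      ∑ y ∈ range (b ^ k), #{c ∈ range (b ^ (k * m + h)) |
        ∃ N ≤ m, s + X y + blockSum b (k * m + h) c 0 k X N ∈ E} := by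
  have hlen : k * (m + 1) + h = k + (k * m + h) := by ring
  rw [hlen, pow_add b k, card_filter_range_mul]
  refine sum_le_sum fun y hy => card_le_card fun c hc => ?_
  obtain ⟨hc, N, hN, hmem⟩ := mem_filter.1 hc
  refine mem_filter.2 ⟨hc, ?_⟩
  rcases N with _ | N
  · exact absurd (by simpa [blockSum] using hmem) hs
  · have hkN : k * N ≤ k * m := Nat.mul_le_mul_left k (by lia)
    rw [blockSum_zero_mul_pow_add_succ hb X (mem_range.1 hy) (mem_range.1 hc) (by lia),
      ← add_assoc] at hmem
    exact ⟨N, by lia, hmem⟩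

theorem card_exists_blockSum_mem_le {b : ℕ} (hb : 0 < b) (k h : ℕ) (X : ℕ → ℝ) {E : Set ℝ}
    {Φ : ℕ → ℝ → ℝ} (hΦ : ∀ m s, 0 ≤ Φ m s) (hE : ∀ m, ∀ s ∈ E, 1 ≤ Φ m s)
    (hstep : ∀ m s, ∑ y ∈ range (b ^ k), Φ m (s + X y) ≤ b ^ k * Φ (m + 1) s) (m : ℕ) (s : ℝ) :
    (#{a ∈ range (b ^ (k * m + h)) |
      ∃ N ≤ m, s + blockSum b (k * m + h) a 0 k X N ∈ E} : ℝ) ≤ b ^ (k * m + h) * Φ m s := by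
  have hmem : ∀ m, ∀ s ∈ E, (#{a ∈ range (b ^ (k * m + h)) |
      ∃ N ≤ m, s + blockSum b (k * m + h) a 0 k X N ∈ E} : ℝ) ≤ b ^ (k * m + h) * Φ m s :=
    fun m s hs => calc
      _ ≤ ((b ^ (k * m + h) : ℕ) : ℝ) := by
        exact_mod_cast (card_filter_le _ _).trans (card_range _).le
      _ ≤ _ := by push_cast; exact le_mul_of_one_le_right (by positivity) (hE m s hs)
  induction m generalizing s with
  | zero =>
    by_cases hs : s ∈ E
    · exact hmem 0 s hs
    · have hnever : ∀ a, ¬∃ N ≤ 0, s + blockSum b (k * 0 + h) a 0 k X N ∈ E := by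
        simpa [blockSum] using hs
      simp only [hnever, filter_false, card_empty, Nat.cast_zero]
      exact mul_nonneg (by positivity) (hΦ 0 s)
  | succ m ih =>
    by_cases hs : s ∈ E
    · exact hmem (m + 1) s hs
    · calc (#{a ∈ range (b ^ (k * (m + 1) + h)) |
              ∃ N ≤ m + 1, s + blockSum b (k * (m + 1) + h) a 0 k X N ∈ E} : ℝ)
          ≤ ∑ y ∈ range (b ^ k), (#{c ∈ range (b ^ (k * m + h)) |
              ∃ N ≤ m, s + X y + blockSum b (k * m + h) c 0 k X N ∈ E} : ℝ) :=
            mod_cast card_exists_blockSum_mem_succ_le hb k h m X hs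
        _ ≤ ∑ y ∈ range (b ^ k), (b : ℝ) ^ (k * m + h) * Φ m (s + X y) :=
            sum_le_sum fun y _ => ih (s + X y)
        _ ≤ b ^ (k * m + h) * (b ^ k * Φ (m + 1) s) := by
            rw [← mul_sum]; gcongr; exact hstep m s
        _ = b ^ (k * (m + 1) + h) * Φ (m + 1) s := by ring

/-! ### A fourth-moment maximal inequality -/

/-- The indicator of `S` minus its mean over `range Q`, when `S ⊆ range Q`. -/
noncomputable def centeredIndicator (Q : ℕ) (S : Finset ℕ) (y : ℕ) : ℝ :=
  (if y ∈ S then 1 else 0) - #S / Q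

theorem sum_range_comp_centeredIndicator {Q : ℕ} {S : Finset ℕ} (hS : S ⊆ range Q) (g : ℝ → ℝ) :
    ∑ y ∈ range Q, g (centeredIndicator Q S y) =
      Q * ((#S / Q : ℝ) * g (1 - #S / Q) + (1 - #S / Q) * g (-(#S / Q))) := by
  have hmem : ∀ y ∈ S, g (centeredIndicator Q S y) = g (1 - #S / Q) := fun y hy => by
    rw [centeredIndicator, if_pos hy]
  have hnotMem : ∀ y ∈ range Q \ S, g (centeredIndicator Q S y) = g (-(#S / Q)) := fun y hy => by
    rw [centeredIndicator, if_neg (mem_sdiff.1 hy).2, zero_sub]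
  have hcard : (#(range Q \ S) : ℝ) = Q - #S := by
    rw [cast_card_sdiff hS, card_range]
  rw [← sum_sdiff hS, sum_congr rfl hmem, sum_congr rfl hnotMem, sum_const, sum_const,
    nsmul_eq_mul, nsmul_eq_mul, hcard]
  rcases Nat.eq_zero_or_pos Q with rfl | hQ
  · simp [subset_empty.1 (by simpa using hS : S ⊆ ∅)]
  · field_simp
    ring

/-- An upper bound for `𝔼 (s + Y₁ + ⋯ + Y_m) ^ 4`, for independent centred Bernoulli variables `Yᵢ`
of parameter `q`. The exact moment is smaller by `6 m (q (1 - q)) ^ 2`. -/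
def fourthMomentBound (q : ℝ) (m : ℕ) (s : ℝ) : ℝ :=
  s ^ 4 + 6 * m * (q * (1 - q)) * s ^ 2 + 4 * m * (q * (1 - q) * (1 - 2 * q)) * s +
    3 * m ^ 2 * (q * (1 - q)) ^ 2 + m * (q * (1 - q))

theorem pow_four_le_fourthMomentBound {q : ℝ} (hq₀ : 0 ≤ q) (hq₁ : q ≤ 1) (m : ℕ) (s : ℝ) :
    s ^ 4 ≤ fourthMomentBound q m s := by
  have hv : 0 ≤ q * (1 - q) := mul_nonneg hq₀ (sub_nonneg.2 hq₁)
  have hquad : 0 ≤ 6 * s ^ 2 + 4 * (1 - 2 * q) * s + 1 := by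
    nlinarith [sq_nonneg (2 * s + (1 - 2 * q))]
  have hlin : 0 ≤ m * (q * (1 - q)) * (6 * s ^ 2 + 4 * (1 - 2 * q) * s + 1) := by positivity
  have hsq : 0 ≤ 3 * (m : ℝ) ^ 2 * (q * (1 - q)) ^ 2 := by positivity
  rw [fourthMomentBound]
  linarith

theorem fourthMomentBound_step (q : ℝ) (m : ℕ) (s : ℝ) :
    q * fourthMomentBound q m (s + (1 - q)) + (1 - q) * fourthMomentBound q m (s + -q) ≤
      fourthMomentBound q (m + 1) s := by
  have hdiff : fourthMomentBound q (m + 1) s -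
      (q * fourthMomentBound q m (s + (1 - q)) + (1 - q) * fourthMomentBound q m (s + -q)) =
      6 * (q * (1 - q)) ^ 2 := by
    simp only [fourthMomentBound]
    push_cast
    ring
  linarith [sq_nonneg (q * (1 - q))]

theorem fourthMomentBound_zero_le {p q : ℝ} (hq₀ : 0 ≤ q) (hq₁ : q ≤ 1) (hqp : q ≤ p) (m : ℕ) :
    fourthMomentBound q m 0 ≤ 3 * m ^ 2 * p ^ 2 + m * p := by
  have hv : 0 ≤ q * (1 - q) := mul_nonneg hq₀ (sub_nonneg.2 hq₁)
  have hvp : q * (1 - q) ≤ p := by nlinarith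
  calc fourthMomentBound q m 0 = 3 * m ^ 2 * (q * (1 - q)) ^ 2 + m * (q * (1 - q)) := by
        rw [fourthMomentBound]; ring
    _ ≤ 3 * m ^ 2 * p ^ 2 + m * p := by
        gcongr 3 * m ^ 2 * ?_ + m * ?_
        exact pow_le_pow_left₀ hv hvp 2

theorem card_exists_le_abs_blockSum_mul_pow_four_le {b k : ℕ} (hb : 0 < b) {S : Finset ℕ}
    (hS : S ⊆ range (b ^ k)) {p : ℝ} (hp : (#S : ℝ) / b ^ k ≤ p) {t : ℝ} (ht : 0 < t) (h m : ℕ) :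
    (#{a ∈ range (b ^ (k * m + h)) |
      ∃ N ≤ m, t ≤ |blockSum b (k * m + h) a 0 k (centeredIndicator (b ^ k) S) N|} : ℝ) * t ^ 4 ≤
      b ^ (k * m + h) * (3 * m ^ 2 * p ^ 2 + m * p) := by
  set q : ℝ := #S / b ^ k
  have hq₀ : 0 ≤ q := by positivity
  have hq₁ : q ≤ 1 :=
    div_le_one_of_le₀ (by exact_mod_cast (card_le_card hS).trans_eq (card_range _)) (by positivity)
  have hstep : ∀ m s, ∑ y ∈ range (b ^ k),
      fourthMomentBound q m (s + centeredIndicator (b ^ k) S y) / t ^ 4 ≤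
      b ^ k * (fourthMomentBound q (m + 1) s / t ^ 4) := fun m s => by
    rw [sum_range_comp_centeredIndicator hS fun x => fourthMomentBound q m (s + x) / t ^ 4]
    push_cast
    calc _ = b ^ k * ((q * fourthMomentBound q m (s + (1 - q)) +
          (1 - q) * fourthMomentBound q m (s + -q)) / t ^ 4) := by ring
      _ ≤ _ := by gcongr; exact fourthMomentBound_step q m s
  have hlarge : ∀ m, ∀ s ∈ {s : ℝ | t ≤ |s|}, 1 ≤ fourthMomentBound q m s / t ^ 4 := fun m s hs =>
    (one_le_div (by positivity)).2 <| calc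
      t ^ 4 ≤ |s| ^ 4 := pow_le_pow_left₀ ht.le hs 4
      _ = s ^ 4 := Even.pow_abs (by decide) s
      _ ≤ _ := pow_four_le_fourthMomentBound hq₀ hq₁ m s
  have hmax := card_exists_blockSum_mem_le hb k h (centeredIndicator (b ^ k) S)
    (fun m s => div_nonneg ((by positivity : 0 ≤ s ^ 4).trans
      (pow_four_le_fourthMomentBound hq₀ hq₁ m s)) (by positivity)) hlarge hstep m 0
  simp only [zero_add, Set.mem_ofPred_eq] at hmax
  calc _ ≤ (b : ℝ) ^ (k * m + h) * (fourthMomentBound q m 0 / t ^ 4) * t ^ 4 := by gcongr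
    _ = b ^ (k * m + h) * fourthMomentBound q m 0 := by field_simp
    _ ≤ _ := by gcongr; exact fourthMomentBound_zero_le hq₀ hq₁ hp m

/-- The words of length `H` for which the walk with increments `X` over the length-`k` blocks
starting at position `r` reaches absolute value `t`. -/
noncomputable def escapeWords (b H k r : ℕ) (X : ℕ → ℝ) (t : ℝ) : Finset ℕ :=
  {a ∈ range (b ^ H) | ∃ N, r + k * N ≤ H ∧ t ≤ |blockSum b H a r k X N|}

theorem card_escapeWords_add_le {b : ℕ} (hb : 0 < b) (H k r : ℕ) (X : ℕ → ℝ) (t : ℝ) :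
    #(escapeWords b (r + H) k r X t) ≤ b ^ r * #(escapeWords b H k 0 X t) := by
  have hprefix : ∀ y ∈ range (b ^ r), #{c ∈ range (b ^ H) | ∃ N, r + k * N ≤ r + H ∧
      t ≤ |blockSum b (r + H) (y * b ^ H + c) r k X N|} ≤ #(escapeWords b H k 0 X t) := by
    refine fun y _ => card_le_card fun c hc => ?_
    obtain ⟨hc, N, hN, hle⟩ := mem_filter.1 hc
    have hN : 0 + k * N ≤ H := by lia
    refine mem_filter.2 ⟨hc, N, hN, ?_⟩
    rwa [← blockSum_mul_pow_add hb r y c X hN, add_zero]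
  rw [escapeWords, pow_add, card_filter_range_mul]
  simpa using sum_le_sum hprefix

theorem card_escapeWords_mul_pow_four_le {b H k r : ℕ} (hb : 0 < b) (hk : 0 < k) (hr : r ≤ H)
    {S : Finset ℕ} (hS : S ⊆ range (b ^ k)) {p : ℝ} (hp : (#S : ℝ) / b ^ k ≤ p)
    {t : ℝ} (ht : 0 < t) :
    #(escapeWords b H k r (centeredIndicator (b ^ k) S) t) * t ^ 4 ≤
      (b : ℝ) ^ H * (3 * (H / k : ℝ) ^ 2 * p ^ 2 + H / k * p) := by
  set X := centeredIndicator (b ^ k) S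
  obtain ⟨m, h, rfl, hh⟩ : ∃ m h, H = r + (k * m + h) ∧ h < k :=
    ⟨(H - r) / k, (H - r) % k, by have := Nat.div_add_mod (H - r) k; lia, Nat.mod_lt _ hk⟩
  have hp₀ : 0 ≤ p := (by positivity : (0 : ℝ) ≤ #S / b ^ k).trans hp
  have hm : (m : ℝ) ≤ ((r + (k * m + h) : ℕ) : ℝ) / k := by
    rw [le_div_iff₀ (by positivity)]
    exact_mod_cast (by lia : m * k ≤ r + (k * m + h))
  have hsub : escapeWords b (k * m + h) k 0 X t ⊆ {c ∈ range (b ^ (k * m + h)) |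
      ∃ N ≤ m, t ≤ |blockSum b (k * m + h) c 0 k X N|} := fun c hc => by
    obtain ⟨hc, N, hN, hle⟩ := mem_filter.1 hc
    have hNm : N < m + 1 := Nat.lt_of_mul_lt_mul_left (a := k) (by lia)
    exact mem_filter.2 ⟨hc, N, by lia, hle⟩
  have hzero : #(escapeWords b (k * m + h) k 0 X t) * t ^ 4 ≤
      (b : ℝ) ^ (k * m + h) * (3 * m ^ 2 * p ^ 2 + m * p) := calc
    _ ≤ _ := by gcongr
    _ ≤ _ := card_exists_le_abs_blockSum_mul_pow_four_le hb hS hp ht h m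
  calc #(escapeWords b (r + (k * m + h)) k r X t) * t ^ 4
      ≤ b ^ r * #(escapeWords b (k * m + h) k 0 X t) * t ^ 4 := by
        gcongr; exact_mod_cast card_escapeWords_add_le hb (k * m + h) k r X t
    _ ≤ b ^ r * (b ^ (k * m + h) * (3 * m ^ 2 * p ^ 2 + m * p)) := by
        rw [mul_assoc]; exact mul_le_mul_of_nonneg_left hzero (by positivity)
    _ = b ^ (r + (k * m + h)) * (3 * m ^ 2 * p ^ 2 + m * p) := by rw [pow_add]; ring
    _ ≤ _ := by gcongr

/-! ### Chaining over the block length -/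

/-- The deviation allowed at the level `k` of the chaining over digit block lengths. Counting
escapes costs a factor `b ^ k` for the possible blocks, and the fourth moment gains
`b ^ (-2 * k)`, which leaves room for any ratio whose fourth power exceeds `1 / 2`. -/
noncomputable def levelTolerance (b H k : ℕ) : ℝ :=
  40 * b * √H * (9 / 10) ^ k

theorem sum_levelTolerance_le (b H K : ℕ) :
    ∑ k ∈ range K, levelTolerance b H k ≤ 400 * b * √H := by
  have hgeom : ∑ k ∈ range K, (9 / 10 : ℝ) ^ k ≤ 10 := by
    have : (0 : ℝ) < (9 / 10) ^ K := by positivity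
    rw [geom_sum_eq (by norm_num), div_le_iff_of_neg (by norm_num)]
    linarith
  calc ∑ k ∈ range K, levelTolerance b H k = 40 * b * √H * ∑ k ∈ range K, (9 / 10) ^ k := by
        simp only [levelTolerance, mul_sum]
    _ ≤ 40 * b * √H * 10 := by gcongr
    _ = 400 * b * √H := by ring

theorem levelTolerance_pos {b H : ℕ} (hb : 0 < b) (hH : 0 < H) (k : ℕ) :
    0 < levelTolerance b H k := by
  rw [levelTolerance]; positivity

theorem levelTolerance_pow_four (b H k : ℕ) :
    levelTolerance b H k ^ 4 = 40 ^ 4 * b ^ 4 * H ^ 2 * ((9 / 10) ^ 4) ^ k := by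
  have hsqrt : √(H : ℝ) ^ 4 = H ^ 2 := by
    rw [show 4 = 2 * 2 from rfl, pow_mul, Real.sq_sqrt (Nat.cast_nonneg H)]
  rw [levelTolerance, mul_pow, mul_pow, mul_pow, hsqrt, pow_right_comm]

/-- The increment of the chaining between the block lengths `k` and `k + 1`: the interval
`[e / b * b, e)` is the part of `[0, e)` that is not a union of blocks of the level `k`. -/
noncomputable def levelIncrement (b k e : ℕ) : ℕ → ℝ :=
  centeredIndicator (b ^ (k + 1)) (Ico (e / b * b) e)

theorem card_Ico_div_mul (e b : ℕ) : #(Ico (e / b * b) e) = e % b := by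
  rw [Nat.card_Ico, Nat.mod_eq_sub_div_mul]

theorem card_escapeWords_levelIncrement_mul_pow_four_le {b H k e r : ℕ} (hb : 2 ≤ b)
    (hk : b ^ (k + 1) ≤ H) (he : e < b ^ (k + 1)) (hr : r ≤ k) {t : ℝ} (ht : 0 < t) :
    #(escapeWords b H (k + 1) r (levelIncrement b k e) t) * t ^ 4 ≤
      (b : ℝ) ^ H * (7 / 2 * H ^ 2 / ((k + 1) * (b ^ k) ^ 2)) := by
  have hb₂ : (2 : ℝ) ≤ b := by exact_mod_cast hb
  have hkH : (b : ℝ) ^ k * b ≤ H := by rw [← pow_succ]; exact_mod_cast hk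
  have hrH : r ≤ H := by
    have : k < b ^ k := Nat.lt_pow_self (by lia)
    have : b ^ k ≤ b ^ (k + 1) := Nat.pow_le_pow_right (by lia) (by lia)
    lia
  have hmean : (#(Ico (e / b * b) e) : ℝ) / b ^ (k + 1) ≤ 1 / b ^ k := by
    rw [card_Ico_div_mul, pow_succ', ← div_div]
    gcongr
    exact div_le_one_of_le₀ (by exact_mod_cast (Nat.mod_lt e (by lia)).le) (by positivity)
  have hsub : Ico (e / b * b) e ⊆ range (b ^ (k + 1)) := fun y hy =>
    mem_range.2 ((mem_Ico.1 hy).2.trans he)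
  refine (card_escapeWords_mul_pow_four_le (by lia) (by lia) hrH hsub hmean ht).trans ?_
  gcongr
  have hblocks : (2 : ℝ) ≤ H / b ^ k := by
    rw [le_div_iff₀ (by positivity)]; nlinarith [(by positivity : (0 : ℝ) < b ^ k)]
  have hκ : (1 : ℝ) ≤ k + 1 := by simp
  push_cast
  calc 3 * (H / (k + 1) : ℝ) ^ 2 * (1 / (b : ℝ) ^ k) ^ 2 + H / (k + 1) * (1 / (b : ℝ) ^ k)
      = (3 * (H / (b : ℝ) ^ k) ^ 2 / (k + 1) + H / (b : ℝ) ^ k) / (k + 1) := by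
        field_simp
    _ ≤ (3 * (H / (b : ℝ) ^ k) ^ 2 + (H / (b : ℝ) ^ k) ^ 2 / 2) / (k + 1) := by
        gcongr (?_ + ?_) / _
        · exact div_le_self (by positivity) hκ
        · nlinarith
    _ = 7 / 2 * H ^ 2 / ((k + 1) * ((b : ℝ) ^ k) ^ 2) := by
        field_simp; norm_num

theorem card_escapeWords_levelTolerance_le {b H k e r : ℕ} (hb : 2 ≤ b) (hk : b ^ (k + 1) ≤ H)
    (he : e < b ^ (k + 1)) (hr : r ≤ k) :
    b ^ (k + 1) * (k + 1) *
        #(escapeWords b H (k + 1) r (levelIncrement b k e) (levelTolerance b H k / (k + 1))) ≤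
      (b : ℝ) ^ H / (40 ^ 4 * b ^ 3) * (7 / 2 * (k + 1) ^ 4 * (7 / 9) ^ k) := by
  have hb₂ : (2 : ℝ) ≤ b := by exact_mod_cast hb
  have hH : 0 < H := (pow_pos (by lia) _).trans_le hk
  set t : ℝ := levelTolerance b H k / (k + 1) with ht
  have ht₀ : 0 < t := div_pos (levelTolerance_pos (by lia) hH k) (by positivity)
  have hdecay : 1 ≤ (b : ℝ) ^ k * ((7 / 9) ^ k * ((9 / 10) ^ 4) ^ k) := by
    rw [← mul_pow, ← mul_pow]
    exact one_le_pow₀ (by linarith)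
  refine le_of_mul_le_mul_right ?_ (pow_pos ht₀ 4)
  calc (b : ℝ) ^ (k + 1) * (k + 1) * #(escapeWords b H (k + 1) r (levelIncrement b k e) t) * t ^ 4
      ≤ (b : ℝ) ^ (k + 1) * (k + 1) * (b ^ H * (7 / 2 * H ^ 2 / ((k + 1) * (b ^ k) ^ 2))) := by
        rw [mul_assoc _ _ (t ^ 4)]
        exact mul_le_mul_of_nonneg_left
          (card_escapeWords_levelIncrement_mul_pow_four_le hb hk he hr ht₀) (by positivity)
    _ = (b : ℝ) ^ H * (7 / 2) * b * H ^ 2 / b ^ k := by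
        rw [pow_succ]; field_simp
    _ ≤ (b : ℝ) ^ H * (7 / 2) * b * H ^ 2 / b ^ k *
          (b ^ k * ((7 / 9) ^ k * ((9 / 10) ^ 4) ^ k)) :=
        le_mul_of_one_le_right (by positivity) hdecay
    _ = _ := by
        have ht₄ : t ^ 4 = levelTolerance b H k ^ 4 / (k + 1) ^ 4 := by rw [ht, div_pow]
        rw [ht₄, levelTolerance_pow_four]
        field_simp

/-- The words of length `H` for which, at some level of the chaining and for some starting residue,
the walk of level increments escapes its share of the tolerance. -/
noncomputable def irregularWords (b H : ℕ) : Finset ℕ :=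
  (range (Nat.log b H)).biUnion fun k => (range (b ^ (k + 1))).biUnion fun e =>
    (range (k + 1)).biUnion fun r =>
      escapeWords b H (k + 1) r (levelIncrement b k e) (levelTolerance b H k / (k + 1))

theorem sum_add_one_pow_mul_geometric_le (n K : ℕ) {r : ℝ} (hr₀ : 0 ≤ r) (hr₁ : r < 1) :
    ∑ k ∈ range K, (k + 1 : ℝ) ^ n * r ^ k ≤ n.factorial / (1 - r) ^ (n + 1) := by
  have hnorm : ‖r‖ < 1 := by rwa [Real.norm_of_nonneg hr₀]
  have hpow : ∀ k : ℕ, (k + 1 : ℝ) ^ n ≤ n.factorial * (k + n).choose n := fun k => by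
    exact_mod_cast (Nat.pow_succ_le_ascFactorial (k + 1) n).trans_eq
      (Nat.ascFactorial_eq_factorial_mul_choose k n)
  calc ∑ k ∈ range K, (k + 1 : ℝ) ^ n * r ^ k
      ≤ ∑ k ∈ range K, n.factorial * ((k + n).choose n * r ^ k) := by
        refine sum_le_sum fun k _ => ?_
        rw [← mul_assoc]
        gcongr
        exact hpow k
    _ ≤ n.factorial * ∑' k : ℕ, ((k + n).choose n * r ^ k) := by
        rw [← mul_sum]
        gcongr
        exact (summable_choose_mul_geometric_of_norm_lt_one n hnorm).sum_le_tsum _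
          fun k _ => by positivity
    _ = n.factorial / (1 - r) ^ (n + 1) := by
        rw [tsum_choose_mul_geometric_of_norm_lt_one n hnorm, mul_one_div]

theorem card_biUnion_escapeWords_levelTolerance_le {b H k : ℕ} (hb : 2 ≤ b)
    (hk : b ^ (k + 1) ≤ H) :
    (#((range (b ^ (k + 1))).biUnion fun e => (range (k + 1)).biUnion fun r =>
        escapeWords b H (k + 1) r (levelIncrement b k e) (levelTolerance b H k / (k + 1))) : ℝ) ≤
      (b : ℝ) ^ H / (40 ^ 4 * b ^ 3) * (7 / 2 * (k + 1) ^ 4 * (7 / 9) ^ k) := by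
  set C : ℝ := (b : ℝ) ^ H / (40 ^ 4 * b ^ 3) * (7 / 2 * (k + 1) ^ 4 * (7 / 9) ^ k)
  have hescape : ∀ e ∈ range (b ^ (k + 1)), ∀ r ∈ range (k + 1),
      (#(escapeWords b H (k + 1) r (levelIncrement b k e) (levelTolerance b H k / (k + 1))) : ℝ) ≤
        C / (b ^ (k + 1) * (k + 1)) := fun e he r hr => by
    rw [le_div_iff₀' (by positivity)]
    exact card_escapeWords_levelTolerance_le hb hk (mem_range.1 he)
      (Nat.lt_succ_iff.1 (mem_range.1 hr))
  calc _ ≤ ∑ e ∈ range (b ^ (k + 1)), ∑ r ∈ range (k + 1),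
        (#(escapeWords b H (k + 1) r (levelIncrement b k e)
          (levelTolerance b H k / (k + 1))) : ℝ) :=
        mod_cast card_biUnion_le.trans (sum_le_sum fun e _ => card_biUnion_le)
    _ ≤ ∑ e ∈ range (b ^ (k + 1)), ∑ r ∈ range (k + 1), C / (b ^ (k + 1) * (k + 1)) :=
        sum_le_sum fun e he => sum_le_sum fun r hr => hescape e he r hr
    _ = C := by
        simp only [sum_const, card_range, nsmul_eq_mul]
        push_cast
        field_simp

theorem card_irregularWords_le {b : ℕ} (hb : 2 ≤ b) (H : ℕ) :
    24 * #(irregularWords b H) * b ^ 2 ≤ b ^ H := by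
  have hb₂ : (2 : ℝ) ≤ b := by exact_mod_cast hb
  have hgeom := sum_add_one_pow_mul_geometric_le 4 (Nat.log b H) (r := 7 / 9) (by norm_num)
    (by norm_num)
  have hcard : (#(irregularWords b H) : ℝ) ≤ b ^ H / (16 * b ^ 3) := calc
    _ ≤ ∑ k ∈ range (Nat.log b H),
          (b : ℝ) ^ H / (40 ^ 4 * b ^ 3) * (7 / 2 * (k + 1) ^ 4 * (7 / 9) ^ k) := by
        refine (Nat.cast_le.2 card_biUnion_le).trans ?_
        push_cast
        refine sum_le_sum fun k hk => card_biUnion_escapeWords_levelTolerance_le hb ?_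
        exact Nat.pow_le_of_le_log (by rintro rfl; simp at hk) (mem_range.1 hk)
    _ = (b : ℝ) ^ H / (40 ^ 4 * b ^ 3) * (7 / 2) *
          ∑ k ∈ range (Nat.log b H), (k + 1 : ℝ) ^ 4 * (7 / 9) ^ k := by
        rw [mul_sum]; exact sum_congr rfl fun k _ => by ring
    _ ≤ (b : ℝ) ^ H / (40 ^ 4 * b ^ 3) * (7 / 2) *
          (Nat.factorial 4 / (1 - 7 / 9 : ℝ) ^ (4 + 1)) := by gcongr
    _ = (b : ℝ) ^ H / (16 * b ^ 3) * (16 / 40 ^ 4 * (7 / 2) * (24 / (2 / 9) ^ 5)) := by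
        norm_num [Nat.factorial]; ring
    _ ≤ (b : ℝ) ^ H / (16 * b ^ 3) := mul_le_of_le_one_right (by positivity) (by norm_num)
  have hreal : 24 * (#(irregularWords b H) : ℝ) * b ^ 2 ≤ b ^ H := calc
    _ ≤ 24 * ((b : ℝ) ^ H / (16 * b ^ 3)) * b ^ 2 := by gcongr
    _ = (b : ℝ) ^ H * (3 / (2 * b)) := by field_simp; norm_num
    _ ≤ (b : ℝ) ^ H := mul_le_of_le_one_right (by positivity) <| by
        rw [div_le_one₀ (by positivity)]; linarith
  exact_mod_cast hreal

theorem sum_range_eq_sum_residues {M : Type*} [AddCommMonoid M] {k : ℕ} (hk : 0 < k) (f : ℕ → M)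
    (N : ℕ) :
    ∑ j ∈ range N, f j = ∑ r ∈ range k, ∑ i ∈ range ((N + k - 1 - r) / k), f (r + k * i) := by
  have hmem : ∀ r < k, ∀ i, i < (N + k - 1 - r) / k ↔ r + k * i < N := fun r hr i => by
    rw [Nat.lt_iff_add_one_le, Nat.le_div_iff_mul_le hk, add_one_mul, mul_comm i]
    lia
  rw [sum_sigma']
  refine sum_nbij' (fun j => ⟨j % k, j / k⟩) (fun p => p.1 + k * p.2) ?_ ?_ ?_ ?_ ?_
  · intro j hj
    have hr := Nat.mod_lt j hk
    rw [mem_sigma, mem_range, mem_range, hmem _ hr, Nat.mod_add_div]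
    exact ⟨hr, mem_range.1 hj⟩
  · rintro ⟨r, i⟩ hp
    obtain ⟨hr, hi⟩ := mem_sigma.1 hp
    exact mem_range.2 ((hmem r (mem_range.1 hr) i).1 (mem_range.1 hi))
  · exact fun j _ => Nat.mod_add_div j k
  · rintro ⟨r, i⟩ hp
    have hr := mem_range.1 (mem_sigma.1 hp).1
    simp [Nat.add_mul_div_left _ _ hk, Nat.div_eq_of_lt hr, Nat.mod_eq_of_lt hr]
  · exact fun j _ => by rw [Nat.mod_add_div]

theorem abs_blockSum_lt_of_notMem_irregularWords {b H a k e r N : ℕ} (ha : a < b ^ H)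
    (hreg : a ∉ irregularWords b H) (hk : k < Nat.log b H) (he : e < b ^ (k + 1)) (hr : r < k + 1)
    (hN : r + (k + 1) * N ≤ H) :
    |blockSum b H a r (k + 1) (levelIncrement b k e) N| < levelTolerance b H k / (k + 1) := by
  contrapose! hreg
  simp only [irregularWords, escapeWords, mem_biUnion, mem_filter, mem_range]
  exact ⟨k, hk, e, he, r, hr, ha, N, hN, hreg⟩

theorem abs_sum_levelIncrement_le {b H a k e N : ℕ} (ha : a < b ^ H)
    (hreg : a ∉ irregularWords b H) (hN : N + Nat.log b H ≤ H) (hk : k < Nat.log b H)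
    (he : e < b ^ (k + 1)) :
    |∑ j ∈ range N, levelIncrement b k e (digitBlock b H a j (k + 1))| ≤ levelTolerance b H k := by
  rw [sum_range_eq_sum_residues k.succ_pos]
  calc _ ≤ ∑ r ∈ range (k + 1), levelTolerance b H k / (k + 1) := by
        refine (abs_sum_le_sum_abs _ _).trans (sum_le_sum fun r hr => ?_)
        have hr := mem_range.1 hr
        refine (abs_blockSum_lt_of_notMem_irregularWords ha hreg hk he hr ?_).le
        have := Nat.mul_div_le (N + (k + 1) - 1 - r) (k + 1)
        lia
    _ = levelTolerance b H k := by
        rw [sum_const, card_range, nsmul_eq_mul]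
        push_cast
        field_simp

/-- The indicator of `w < e` minus its mean over `w ∈ range B` (for `e ≤ B`): the summand of the
discrepancy count for the interval `[0, e / B)`. -/
noncomputable def prefixDeviation (B w e : ℕ) : ℝ :=
  (if w < e then 1 else 0) - e / B

theorem prefixDeviation_self {B w : ℕ} (hw : w < B) : prefixDeviation B w B = 0 := by
  have hB : (B : ℝ) ≠ 0 := by exact_mod_cast (by lia : B ≠ 0)
  rw [prefixDeviation, if_pos hw, div_self hB, sub_self]

theorem prefixDeviation_pow_succ {b : ℕ} (hb : 0 < b) (k w e : ℕ) :
    prefixDeviation (b ^ (k + 1)) w e =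
      prefixDeviation (b ^ k) (w / b) (e / b) + levelIncrement b k e w := by
  have hlt : w / b < e / b ↔ w < e / b * b := Nat.div_lt_iff_lt_mul hb
  have hle : e / b * b ≤ e := Nat.div_mul_le_self e b
  have hsplit : (if w < e then 1 else 0 : ℝ) =
      (if w / b < e / b then 1 else 0) + if w ∈ Ico (e / b * b) e then 1 else 0 := by
    simp only [hlt, mem_Ico]
    split_ifs <;> first | lia | norm_num
  have hfrac : (e : ℝ) / (b ^ (k + 1) : ℕ) =
      (e / b : ℕ) / (b ^ k : ℕ) + #(Ico (e / b * b) e) / (b ^ (k + 1) : ℕ) := by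
    have he : (e : ℝ) = (e / b : ℕ) * b + (e % b : ℕ) := by
      exact_mod_cast (Nat.div_add_mod' e b).symm
    rw [card_Ico_div_mul]
    nth_rewrite 1 [he]
    push_cast
    field_simp
    ring
  rw [prefixDeviation, prefixDeviation, levelIncrement, centeredIndicator, hsplit, hfrac]
  ring

theorem abs_sum_prefixDeviation_le_sum_levelTolerance {b H a N : ℕ} (hb : 0 < b) (ha : a < b ^ H)
    (hreg : a ∉ irregularWords b H) (hN : N + Nat.log b H ≤ H) {k : ℕ} (hk : k ≤ Nat.log b H)
    {e : ℕ} (he : e ≤ b ^ k) :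
    |∑ j ∈ range N, prefixDeviation (b ^ k) (digitBlock b H a j k) e| ≤
      ∑ i ∈ range k, levelTolerance b H i := by
  induction k generalizing e with
  | zero =>
    have hzero : ∀ w < 1, prefixDeviation 1 w e = 0 := fun w hw => by
      have : e = 0 ∨ e = 1 := by rw [pow_zero] at he; lia
      obtain rfl : w = 0 := by lia
      rcases this with rfl | rfl <;> simp [prefixDeviation]
    simp [digitBlock, Nat.mod_one, hzero 0]
  | succ k ih =>
    rcases he.eq_or_lt with rfl | he
    · simp only [prefixDeviation_self (digitBlock_lt hb H a _ (k + 1)), sum_const_zero, abs_zero]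
      exact sum_nonneg fun i _ => by rw [levelTolerance]; positivity
    · have hprev := ih (e := e / b) (by lia) (Nat.div_le_of_le_mul (pow_succ' b k ▸ he.le))
      have hsplit : ∀ j ∈ range N, prefixDeviation (b ^ (k + 1)) (digitBlock b H a j (k + 1)) e =
          prefixDeviation (b ^ k) (digitBlock b H a j k) (e / b) +
            levelIncrement b k e (digitBlock b H a j (k + 1)) := fun j hj => by
        have := mem_range.1 hj
        rw [prefixDeviation_pow_succ hb, digitBlock_succ_div (by lia)]
      rw [sum_congr rfl hsplit, sum_add_distrib, sum_range_succ]
      exact (abs_add_le _ _).trans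
        (add_le_add hprev (abs_sum_levelIncrement_le ha hreg hN (by lia) he))

theorem abs_sum_prefixDeviation_le {b H a N : ℕ} (hb : 0 < b) (ha : a < b ^ H)
    (hreg : a ∉ irregularWords b H) (hN : N + Nat.log b H ≤ H) {e : ℕ}
    (he : e ≤ b ^ Nat.log b H) :
    |∑ j ∈ range N, prefixDeviation (b ^ Nat.log b H) (digitBlock b H a j (Nat.log b H)) e| ≤
      400 * b * √H :=
  (abs_sum_prefixDeviation_le_sum_levelTolerance hb ha hreg hN le_rfl he).trans
    (sum_levelTolerance_le b H _)

/-! ### Choosing dyadic cells -/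

theorem card_filter_mul_div_eq_le {P R : ℕ} (hP : 0 < P) (hPR : P ≤ R) (s : Finset ℕ) (a : ℕ) :
    #{v ∈ s | v * P / R = a} ≤ 3 * (R / P) := by
  have hsub : {v ∈ s | v * P / R = a} ⊆ Icc (a * R / P) (a * R / P + (R / P + 1)) := by
    intro v hv
    obtain rfl := (mem_filter.1 hv).2
    have hlower : v * P / R * R ≤ P * v := (Nat.div_mul_le_self _ _).trans_eq (mul_comm _ _)
    refine mem_Icc.2 ⟨Nat.div_le_of_le_mul hlower, ?_⟩
    have hupper : v * P < (v * P / R) * R + R := Nat.lt_div_mul_add (hP.trans_le hPR)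
    have hstart := Nat.lt_div_mul_add (a := v * P / R * R) hP
    have hlength := Nat.lt_div_mul_add (a := R) hP
    refine Nat.lt_succ_iff.1 (Nat.lt_of_mul_lt_mul_right (a := P) ?_)
    lia
  have hcard := card_le_card hsub
  have hone : 1 ≤ R / P := (Nat.one_le_div_iff hP).2 hPR
  rw [Nat.card_Icc] at hcard
  lia

theorem mul_div_add_div_mem_Icc {p h ρ d u v δ : ℕ} (hh : 0 < h) (hd : 0 < d) (hδ : δ ≤ 1)
    (hv : v ∈ Ico (u * d) ((u + 1) * d)) :
    (v * (p * h) / (ρ * d) + δ) / h ∈ Icc (u * p / ρ) ((u + 1) * p / ρ + 1) := by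
  obtain ⟨hlower, hupper⟩ := mem_Ico.1 hv
  have hdiv : v * (p * h) / (ρ * d) / h = v * p / (ρ * d) := by
    rw [Nat.div_div_eq_div_mul, ← mul_assoc, Nat.mul_div_mul_right _ _ hh]
  have hcancel : ∀ x, x * p / ρ = x * d * p / (ρ * d) := fun x => by
    rw [mul_right_comm, Nat.mul_div_mul_right _ _ hd]
  rw [mem_Icc, hcancel u, hcancel (u + 1)]
  constructor
  · calc u * d * p / (ρ * d) ≤ v * p / (ρ * d) := by gcongr
      _ = v * (p * h) / (ρ * d) / h := hdiv.symm
      _ ≤ _ := by gcongr; exact Nat.le_add_right _ _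
  · calc (v * (p * h) / (ρ * d) + δ) / h ≤ (v * (p * h) / (ρ * d) + h) / h := by gcongr; lia
      _ = v * p / (ρ * d) + 1 := by rw [Nat.add_div_right _ hh, hdiv]
      _ ≤ _ := by gcongr

theorem card_Icc_mul_div_le {p ρ : ℕ} (hρ : 0 < ρ) (hρp : ρ ≤ p) (u : ℕ) :
    #(Icc (u * p / ρ) ((u + 1) * p / ρ + 1)) ≤ 4 * (p / ρ) := by
  have hone : 1 ≤ p / ρ := (Nat.one_le_div_iff hρ).2 hρp
  have hadd : (u + 1) * p / ρ ≤ u * p / ρ + p / ρ + 1 := by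
    rw [add_one_mul, Nat.add_div hρ]; split <;> lia
  rw [Nat.card_Icc]
  lia

/- The cells `[v / (ρ * d), (v + 1) / (ρ * d))` refine one cell `[u / ρ, (u + 1) / ρ)` of length at
least `1 / p`. Up to the error `δ`, a point of the cell `v` has the base-`b` expansion
`v * (p * h) / (ρ * d)` to precision `p * h`; its part below precision `p` takes each value in
`range h` roughly equally often. -/
theorem card_filter_mul_div_add_mod_mem_le {p h ρ d δ : ℕ} (hph : 0 < p * h) (hρp : ρ ≤ p)
    (hle : p * h ≤ ρ * d) (hδ : δ ≤ 1) (u : ℕ) (Bad : Finset ℕ) :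
    #{v ∈ Ico (u * d) ((u + 1) * d) | (v * (p * h) / (ρ * d) + δ) % h ∈ Bad} * h ≤
      12 * d * #Bad := by
  have hp : 0 < p := Nat.pos_of_mul_pos_right hph
  have hh : 0 < h := Nat.pos_of_mul_pos_left hph
  have hρ : 0 < ρ := Nat.pos_of_mul_pos_right (hph.trans_le hle)
  have hd : 0 < d := Nat.pos_of_mul_pos_left (hph.trans_le hle)
  set Q := Icc (u * p / ρ) ((u + 1) * p / ρ + 1)
  set s := {v ∈ Ico (u * d) ((u + 1) * d) | (v * (p * h) / (ρ * d) + δ) % h ∈ Bad}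
  have hmaps : ∀ v ∈ s, ((v * (p * h) / (ρ * d) + δ) / h, (v * (p * h) / (ρ * d) + δ) % h) ∈
      Q ×ˢ Bad := fun v hv =>
    mem_product.2 ⟨mul_div_add_div_mem_Icc hh hd hδ (mem_filter.1 hv).1, (mem_filter.1 hv).2⟩
  have hfibre : ∀ x ∈ Q ×ˢ Bad, #{v ∈ s |
      ((v * (p * h) / (ρ * d) + δ) / h, (v * (p * h) / (ρ * d) + δ) % h) = x} ≤
      3 * (ρ * d / (p * h)) := by
    rintro ⟨q, w⟩ -
    refine le_trans (card_le_card fun v hv => ?_)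
      (card_filter_mul_div_eq_le hph hle s (q * h + w - δ))
    obtain ⟨hvs, hqw⟩ := mem_filter.1 hv
    obtain ⟨rfl, rfl⟩ := Prod.mk.inj hqw
    exact mem_filter.2 ⟨hvs, by rw [Nat.div_add_mod', Nat.add_sub_cancel]⟩
  calc #s * h ≤ 3 * (ρ * d / (p * h)) * #(Q ×ˢ Bad) * h := by
        gcongr; exact card_le_mul_card_image_of_maps_to hmaps _ hfibre
    _ ≤ 3 * (ρ * d / (p * h)) * (4 * (p / ρ) * #Bad) * h := by
        rw [card_product]; gcongr; exact card_Icc_mul_div_le hρ hρp u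
    _ = 12 * (p / ρ * (ρ * d / p / h * h)) * #Bad := by rw [Nat.div_div_eq_div_mul]; ring
    _ ≤ 12 * (p / ρ * (ρ * d / p)) * #Bad := by gcongr; exact Nat.div_mul_le_self _ _
    _ ≤ 12 * d * #Bad := by
        gcongr
        calc p / ρ * (ρ * d / p) ≤ p / ρ * (ρ * d) / p := Nat.mul_div_le_mul_div_assoc _ _ _
          _ = p / ρ * ρ * d / p := by rw [mul_assoc]
          _ ≤ p * d / p := by gcongr; exact Nat.div_mul_le_self _ _
          _ = d := Nat.mul_div_cancel_left d hp

theorem card_biUnion_filter_mul_div_add_mod_mem_le {p h ρ d b : ℕ} (hb : 0 < b) (hph : 0 < p * h)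
    (hρp : ρ ≤ p) (hle : p * h ≤ ρ * d) {Bad : Finset ℕ} (hBad : 24 * #Bad * b ^ 2 ≤ h) (u : ℕ) :
    (#((range 2).biUnion fun δ =>
      {v ∈ Ico (u * d) ((u + 1) * d) | (v * (p * h) / (ρ * d) + δ) % h ∈ Bad}) : ℝ) ≤
      d * ((b : ℝ) ^ 2)⁻¹ := by
  set s : ℕ → Finset ℕ := fun δ =>
    {v ∈ Ico (u * d) ((u + 1) * d) | (v * (p * h) / (ρ * d) + δ) % h ∈ Bad}
  have hs : ∀ δ ∈ range 2, #(s δ) * h ≤ 12 * d * #Bad := fun δ hδ =>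
    card_filter_mul_div_add_mod_mem_le hph hρp hle (Nat.lt_succ_iff.1 (mem_range.1 hδ)) u Bad
  have hnat : #((range 2).biUnion s) * b ^ 2 ≤ d := by
    refine Nat.le_of_mul_le_mul_right ?_ (Nat.pos_of_mul_pos_left hph)
    calc #((range 2).biUnion s) * b ^ 2 * h
        ≤ (∑ δ ∈ range 2, #(s δ)) * b ^ 2 * h := by gcongr; exact card_biUnion_le
      _ = (∑ δ ∈ range 2, #(s δ) * h) * b ^ 2 := by rw [← sum_mul]; ring
      _ ≤ (∑ δ ∈ range 2, 12 * d * #Bad) * b ^ 2 := Nat.mul_le_mul_right _ (sum_le_sum hs)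
      _ = d * (24 * #Bad * b ^ 2) := by rw [sum_const, card_range, smul_eq_mul]; ring
      _ ≤ d * h := by gcongr
  rw [← div_eq_mul_inv, le_div_iff₀ (by positivity)]
  exact_mod_cast hnat

theorem exists_forall_mul_div_add_mod_notMem {n ρ d : ℕ} (hd : 0 < d) {p h : ℕ → ℕ}
    {Bad : ℕ → Finset ℕ} (hph : ∀ b ∈ Ioc 1 (n + 1), 0 < p b * h b)
    (hρp : ∀ b ∈ Ioc 1 (n + 1), ρ ≤ p b) (hle : ∀ b ∈ Ioc 1 (n + 1), p b * h b ≤ ρ * d)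
    (hBad : ∀ b ∈ Ioc 1 (n + 1), 24 * #(Bad b) * b ^ 2 ≤ h b) (u : ℕ) :
    ∃ v ∈ Ico (u * d) ((u + 1) * d), ∀ b ∈ Ioc 1 (n + 1), ∀ δ ≤ 1,
      (v * (p b * h b) / (ρ * d) + δ) % h b ∉ Bad b := by
  by_contra! hcon
  set s : ℕ → Finset ℕ := fun b => (range 2).biUnion fun δ =>
    {v ∈ Ico (u * d) ((u + 1) * d) | (v * (p b * h b) / (ρ * d) + δ) % h b ∈ Bad b}
  have hcover : Ico (u * d) ((u + 1) * d) ⊆ (Ioc 1 (n + 1)).biUnion s := fun v hv => by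
    obtain ⟨b, hb, δ, hδ, hmem⟩ := hcon v hv
    exact mem_biUnion.2 ⟨b, hb, mem_biUnion.2
      ⟨δ, mem_range.2 (Nat.lt_succ_iff.2 hδ), mem_filter.2 ⟨hv, hmem⟩⟩⟩
  have hs : ∀ b ∈ Ioc 1 (n + 1), (#(s b) : ℝ) ≤ d * ((b : ℝ) ^ 2)⁻¹ := fun b hb =>
    card_biUnion_filter_mul_div_add_mod_mem_le (zero_lt_one.trans (mem_Ioc.1 hb).1)
      (hph b hb) (hρp b hb) (hle b hb) (hBad b hb) u
  have hlt : (d : ℝ) < d := calc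
    (d : ℝ) = #(Ico (u * d) ((u + 1) * d)) := by simp [add_one_mul]
    _ ≤ ∑ b ∈ Ioc 1 (n + 1), (#(s b) : ℝ) :=
      mod_cast (card_le_card hcover).trans card_biUnion_le
    _ ≤ d * ∑ b ∈ Ioc 1 (n + 1), ((b : ℝ) ^ 2)⁻¹ := by rw [mul_sum]; exact sum_le_sum hs
    _ ≤ d * (((1 : ℕ) : ℝ)⁻¹ - ((n + 1 : ℕ) : ℝ)⁻¹) := by
      gcongr; exact sum_Ioc_inv_sq_le_sub one_ne_zero (by lia)
    _ < d := mul_lt_of_lt_one_right (by positivity) (by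
      rw [Nat.cast_one, inv_one, sub_lt_self_iff]; positivity)
  exact hlt.false

/-! ### Nested stages -/

theorem exists_forall_mem_Icc_div {R d : ℕ → ℕ} (hR : ∀ i, 0 < R i)
    (hRd : ∀ i, R (i + 1) = R i * d i) {P : ℕ → ℕ → Prop}
    (hP : ∀ i u, ∃ v ∈ Ico (u * d i) ((u + 1) * d i), P i v) :
    ∃ x : ℝ, 0 ≤ x ∧ ∀ i, ∃ v : ℕ, P i v ∧
      x ∈ Set.Icc (v / R (i + 1) : ℝ) ((v + 1) / R (i + 1)) := by
  choose next hnext hPnext using hP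
  let v : ℕ → ℕ := fun i => Nat.rec (motive := fun _ => ℕ) 0 next i
  let lower : ℕ → ℝ := fun i => (v i : ℝ) / R i
  let upper : ℕ → ℝ := fun i => ((v i : ℝ) + 1) / R i
  have hR' : ∀ i, (0 : ℝ) < R i := fun i => mod_cast hR i
  have hlower : ∀ i, lower i ≤ lower (i + 1) := fun i => by
    have hv : (v i * d i : ℝ) ≤ v (i + 1) := mod_cast (mem_Ico.1 (hnext i (v i))).1
    rw [div_le_div_iff₀ (hR' i) (hR' (i + 1)), hRd, Nat.cast_mul, mul_left_comm, mul_comm]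
    gcongr
  have hupper : ∀ i, upper (i + 1) ≤ upper i := fun i => by
    have hv : (v (i + 1) + 1 : ℝ) ≤ (v i + 1) * d i := mod_cast (mem_Ico.1 (hnext i (v i))).2
    rw [div_le_div_iff₀ (hR' (i + 1)) (hR' i), hRd, Nat.cast_mul, mul_comm (R i : ℝ), ← mul_assoc]
    gcongr
  have hcell : ∀ i, lower i ≤ upper i := fun i => by
    simp only [lower, upper]
    gcongr
    linarith
  have hnested : Antitone fun i => Set.Icc (lower i) (upper i) :=
    antitone_nat_of_succ_le fun i => Set.Icc_subset_Icc (hlower i) (hupper i)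
  have hmem := Set.mem_iInter.1 (ciSup_mem_iInter_Icc_of_antitone_Icc hnested hcell)
  exact ⟨_, le_trans (by positivity) (hmem 0).1, fun i =>
    ⟨v (i + 1), hPnext i (v i), hmem (i + 1)⟩⟩

theorem exists_floor_mul_eq_mul_div_add {P R v : ℕ} (hR : 0 < R) (hPR : P ≤ R) {x : ℝ}
    (hx : x ∈ Set.Icc (v / R : ℝ) ((v + 1) / R)) :
    ∃ δ ≤ 1, ⌊P * x⌋₊ = v * P / R + δ := by
  obtain ⟨hlower, hupper⟩ := hx
  have hR' : (0 : ℝ) < R := mod_cast hR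
  have hPR' : (P : ℝ) / R ≤ 1 := div_le_one_of_le₀ (mod_cast hPR) hR'.le
  have hle : v * P / R ≤ ⌊P * x⌋₊ := by
    rw [← Nat.floor_div_eq_div (K := ℝ)]
    gcongr
    calc ((v * P : ℕ) : ℝ) / R = P * (v / R) := by push_cast; ring
      _ ≤ P * x := by gcongr
  have hge : ⌊P * x⌋₊ ≤ v * P / R + 1 := by
    rw [← Nat.floor_div_eq_div (K := ℝ), ← Nat.floor_add_one (by positivity)]
    gcongr
    calc P * x ≤ P * ((v + 1) / R) := by gcongr
      _ = ((v * P : ℕ) : ℝ) / R + P / R := by push_cast; ring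
      _ ≤ ((v * P : ℕ) : ℝ) / R + 1 := by gcongr
  exact ⟨⌊P * x⌋₊ - v * P / R, by lia, by lia⟩

theorem floor_natCast_mul_fract {B : ℕ} (hB : 0 < B) {y : ℝ} (hy : 0 ≤ y) :
    ⌊B * Int.fract y⌋₊ = ⌊B * y⌋₊ % B := by
  have hB' : (0 : ℝ) < B := mod_cast hB
  have hfract : 0 ≤ B * Int.fract y := mul_nonneg hB'.le (Int.fract_nonneg y)
  have hlt : ⌊B * Int.fract y⌋₊ < B :=
    (Nat.floor_lt hfract).2 (mul_lt_of_lt_one_right hB' (Int.fract_lt_one y))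
  have hsplit : B * y = B * Int.fract y + (B * ⌊y⌋₊ : ℕ) := by
    rw [Nat.cast_mul, natCast_floor_eq_intCast_floor hy, ← mul_add, Int.fract_add_floor]
  rw [hsplit, Nat.floor_add_natCast hfract, Nat.add_mul_mod_self_left, Nat.mod_eq_of_lt hlt]

/-- The integer whose base-`b` word of length `M' - M` is the block of digits of `x` in positions
`M + 1, …, M'` after the radix point; it encodes digit blocks of `x` as inputs to `digitBlock`. -/
noncomputable def digitWord (b M M' : ℕ) (x : ℝ) : ℕ := ⌊(b : ℝ) ^ M' * x⌋₊ % b ^ (M' - M)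

theorem digitWord_lt {b : ℕ} (hb : 0 < b) (M M' : ℕ) (x : ℝ) :
    digitWord b M M' x < b ^ (M' - M) :=
  Nat.mod_lt _ (pow_pos hb _)

theorem digitBlock_digitWord {b M M' j k : ℕ} (hb : 0 < b) (hjk : M + j + k ≤ M') {x : ℝ}
    (hx : 0 ≤ x) :
    digitBlock b (M' - M) (digitWord b M M' x) j k =
      ⌊(b : ℝ) ^ k * Int.fract ((b : ℝ) ^ (M + j) * x)⌋₊ := by
  have hb' : (b : ℝ) ≠ 0 := mod_cast hb.ne'
  obtain ⟨g, rfl⟩ := Nat.exists_eq_add_of_le hjk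
  have hword : b ^ (M + j + k + g - M) = b ^ g * (b ^ k * b ^ j) := by
    rw [← pow_add, ← pow_add]; congr 1; lia
  have hdrop : M + j + k + g - M - j - k = g := by lia
  have hfloor := floor_natCast_mul_fract (pow_pos hb k) (y := (b : ℝ) ^ (M + j) * x) (by positivity)
  rw [Nat.cast_pow] at hfloor
  rw [digitBlock, digitWord, hdrop, hword, Nat.mod_mul_right_div_self, Nat.mod_mul_right_mod,
    hfloor, ← Nat.floor_div_natCast]
  congr 2
  rw [Nat.cast_pow, div_eq_iff (pow_ne_zero g hb')]
  ring

/-- The number of base-`b` digits that matter at resolution `2 ^ (-4 ^ i)`: the stages of the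
construction fix the digits in positions between two consecutive cuts. -/
def stageCut (b i : ℕ) : ℕ := Nat.log b (2 ^ 4 ^ i)

theorem pow_stageCut_le (b i : ℕ) : b ^ stageCut b i ≤ 2 ^ 4 ^ i :=
  Nat.pow_log_le_self b (by positivity)

theorem lt_pow_stageCut_add_one {b : ℕ} (hb : 1 < b) (i : ℕ) : 2 ^ 4 ^ i < b ^ (stageCut b i + 1) :=
  Nat.lt_pow_succ_log_self hb _

theorem four_mul_stageCut_le {b : ℕ} (hb : 1 < b) (i : ℕ) :
    4 * stageCut b i ≤ stageCut b (i + 1) := by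
  refine Nat.le_log_of_pow_le hb ?_
  rw [mul_comm, pow_mul, pow_succ 4 i, pow_mul 2]
  exact Nat.pow_le_pow_left (pow_stageCut_le b i) 4

theorem stageCut_succ_le {b : ℕ} (hb : 1 < b) (i : ℕ) :
    stageCut b (i + 1) ≤ 4 * stageCut b i + 3 := by
  refine Nat.le_of_lt_succ (Nat.log_lt_of_lt_pow (by positivity) ?_)
  calc 2 ^ 4 ^ (i + 1) = (2 ^ 4 ^ i) ^ 4 := by rw [pow_succ, pow_mul]
    _ < (b ^ (stageCut b i + 1)) ^ 4 :=
      Nat.pow_lt_pow_left (lt_pow_stageCut_add_one hb i) four_ne_zero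
    _ = b ^ (4 * stageCut b i + 3).succ := by rw [← pow_mul]; congr 1; lia

theorem one_le_stageCut {b i : ℕ} (hb : 1 < b) (hbi : b ≤ i + 2) : 1 ≤ stageCut b i := by
  refine Nat.le_log_of_pow_le hb ?_
  calc b ^ 1 ≤ i + 2 := by rwa [pow_one]
    _ ≤ 2 ^ (i + 1) := Nat.lt_two_pow_self
    _ ≤ 2 ^ 4 ^ i := Nat.pow_le_pow_right two_pos (Nat.lt_pow_self (by lia))

/-- From the stage with `b ≤ i + 2` on, the digits of `x` in base `b` between positions
`stageCut b i + 1` and `stageCut b (i + 1)` form a regular word. Delaying base `b` to that stage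
leaves only finitely many bases to handle at each stage. -/
def HasRegularStages (b : ℕ) (x : ℝ) : Prop :=
  ∀ i, b ≤ i + 2 → digitWord b (stageCut b i + 1) (stageCut b (i + 1)) x ∉
    irregularWords b (stageCut b (i + 1) - (stageCut b i + 1))

theorem exists_hasRegularStages : ∃ x : ℝ, 0 ≤ x ∧ ∀ b, 2 ≤ b → HasRegularStages b x := by
  have hstep : ∀ i, 2 ^ 4 ^ (i + 1) = 2 ^ 4 ^ i * 2 ^ (3 * 4 ^ i) := fun i => by
    rw [← pow_add]; congr 1; ring
  have hcuts : ∀ i, ∀ b ∈ Ioc 1 (i + 1 + 1), b ^ (stageCut b i + 1) *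
      b ^ (stageCut b (i + 1) - (stageCut b i + 1)) = b ^ stageCut b (i + 1) := fun i b hb => by
    obtain ⟨hb₁, hbi⟩ := mem_Ioc.1 hb
    have hpos := one_le_stageCut hb₁ hbi
    have hmul := four_mul_stageCut_le hb₁ i
    rw [← pow_add]; congr 1; lia
  have hregular : ∀ i u, ∃ v ∈ Ico (u * 2 ^ (3 * 4 ^ i)) ((u + 1) * 2 ^ (3 * 4 ^ i)),
      ∀ b ∈ Ioc 1 (i + 1 + 1), ∀ δ ≤ 1, (v * b ^ stageCut b (i + 1) / 2 ^ 4 ^ (i + 1) + δ) %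
        b ^ (stageCut b (i + 1) - (stageCut b i + 1)) ∉
        irregularWords b (stageCut b (i + 1) - (stageCut b i + 1)) := fun i u => by
    obtain ⟨v, hv, hgood⟩ := exists_forall_mul_div_add_mod_notMem (n := i + 1) (ρ := 2 ^ 4 ^ i)
      (d := 2 ^ (3 * 4 ^ i)) (by positivity)
      (fun b hb => by
        have := (mem_Ioc.1 hb).1
        positivity)
      (fun b hb => (lt_pow_stageCut_add_one (mem_Ioc.1 hb).1 i).le)
      (fun b hb => by rw [hcuts i b hb, ← hstep]; exact pow_stageCut_le b (i + 1))
      (fun b hb => card_irregularWords_le (mem_Ioc.1 hb).1 _) u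
    exact ⟨v, hv, fun b hb δ hδ => by rw [← hcuts i b hb, hstep]; exact hgood b hb δ hδ⟩
  obtain ⟨x, hx, hcells⟩ := exists_forall_mem_Icc_div (R := fun i => 2 ^ 4 ^ i)
    (fun i => by positivity) hstep hregular
  refine ⟨x, hx, fun b hb i hbi => ?_⟩
  obtain ⟨v, hv, hxv⟩ := hcells i
  obtain ⟨δ, hδ, hfloor⟩ :=
    exists_floor_mul_eq_mul_div_add (by positivity) (pow_stageCut_le b (i + 1)) hxv
  rw [digitWord, ← Nat.cast_pow, hfloor]
  exact hv b (mem_Ioc.2 ⟨hb, by lia⟩) δ hδ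

/-! ### Counting deviations -/

/-- `#{j ∈ [M, N) : z j < α} - α (N - M)`, written as a sum of centred indicators. -/
noncomputable def countDeviation (z : ℕ → ℝ) (α : ℝ) (M N : ℕ) : ℝ :=
  ∑ j ∈ Ico M N, ((if z j < α then 1 else 0) - α)

theorem countDeviation_add_countDeviation (z : ℕ → ℝ) (α : ℝ) {L M N : ℕ} (hLM : L ≤ M)
    (hMN : M ≤ N) :
    countDeviation z α L M + countDeviation z α M N = countDeviation z α L N :=
  sum_Ico_consecutive _ hLM hMN

theorem abs_countDeviation_le (z : ℕ → ℝ) {α : ℝ} (hα : α ∈ Set.Icc 0 1) (M N : ℕ) :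
    |countDeviation z α M N| ≤ (N - M : ℕ) := by
  have hterm : ∀ j ∈ Ico M N, |(if z j < α then 1 else 0) - α| ≤ 1 := fun j _ =>
    abs_sub_le_of_nonneg_of_le (by split_ifs <;> simp) (by split_ifs <;> simp) hα.1 hα.2
  calc |countDeviation z α M N| ≤ ∑ _j ∈ Ico M N, (1 : ℝ) :=
        abs_sum_le_sum_abs _ _ |>.trans (sum_le_sum hterm)
    _ = (N - M : ℕ) := by simp

theorem ite_one_zero_le_ite_one_zero {p q : Prop} [Decidable p] [Decidable q] (hpq : p → q) :
    (if p then (1 : ℝ) else 0) ≤ if q then 1 else 0 := by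
  split_ifs with hp hq <;> simp_all

theorem prefixDeviation_floor_sub_le {B : ℕ} (hB : 0 < B) (z α : ℝ) :
    prefixDeviation B ⌊B * z⌋₊ ⌊B * α⌋₊ - 1 / B ≤ (if z < α then 1 else 0) - α := by
  have hB' : (0 : ℝ) < B := mod_cast hB
  have hindicator : (if ⌊B * z⌋₊ < ⌊B * α⌋₊ then (1 : ℝ) else 0) ≤ if z < α then 1 else 0 :=
    ite_one_zero_le_ite_one_zero fun hfloor =>
      lt_of_mul_lt_mul_left (lt_of_not_ge fun hle => hfloor.not_ge (Nat.floor_mono hle)) hB'.le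
  have hmean : α ≤ ⌊B * α⌋₊ / B + 1 / B := by
    rw [← add_div, le_div_iff₀' hB']
    exact (Nat.lt_floor_add_one _).le
  rw [prefixDeviation]
  linarith

theorem le_prefixDeviation_ceil_add {B : ℕ} (hB : 0 < B) {z α : ℝ} (hz : 0 ≤ z) (hα : 0 ≤ α) :
    (if z < α then 1 else 0) - α ≤ prefixDeviation B ⌊B * z⌋₊ ⌈B * α⌉₊ + 1 / B := by
  have hB' : (0 : ℝ) < B := mod_cast hB
  have hindicator : (if z < α then (1 : ℝ) else 0) ≤ if ⌊B * z⌋₊ < ⌈B * α⌉₊ then 1 else 0 :=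
    ite_one_zero_le_ite_one_zero fun hzα => (Nat.floor_lt (by positivity)).2
      ((mul_lt_mul_of_pos_left hzα hB').trans_le (Nat.le_ceil _))
  have hmean : ⌈B * α⌉₊ / B - 1 / B ≤ α := by
    rw [← sub_div, div_le_iff₀' hB', sub_le_iff_le_add]
    exact (Nat.ceil_lt_add_one (by positivity)).le
  rw [prefixDeviation]
  linarith

section RegularStage

variable {b M M' N : ℕ} {x α : ℝ}

theorem abs_sum_prefixDeviation_floor_le (hb : 0 < b) (hx : 0 ≤ x)
    (hreg : digitWord b M M' x ∉ irregularWords b (M' - M)) (hMN : M ≤ N)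
    (hN : N + Nat.log b (M' - M) ≤ M') {e : ℕ} (he : e ≤ b ^ Nat.log b (M' - M)) :
    |∑ j ∈ Ico M N, prefixDeviation (b ^ Nat.log b (M' - M))
      ⌊(b ^ Nat.log b (M' - M) : ℕ) * Int.fract ((b : ℝ) ^ j * x)⌋₊ e| ≤
      400 * b * √(M' - M : ℕ) := by
  have hword := abs_sum_prefixDeviation_le (N := N - M) hb (digitWord_lt hb M M' x) hreg
    (by lia) he
  rw [sum_Ico_eq_sum_range]
  convert hword using 4 with j hj
  rw [digitBlock_digitWord hb (by have := mem_range.1 hj; lia) hx, Nat.cast_pow]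

theorem abs_countDeviation_le_of_add_log_le (hb : 1 < b) (hx : 0 ≤ x)
    (hreg : digitWord b M M' x ∉ irregularWords b (M' - M)) (hα : α ∈ Set.Icc 0 1) (hMN : M ≤ N)
    (hN : N + Nat.log b (M' - M) ≤ M') :
    |countDeviation (fun j => Int.fract ((b : ℝ) ^ j * x)) α M N| ≤
      400 * b * √(M' - M : ℕ) + b := by
  have hb₀ : 0 < b := zero_lt_one.trans hb
  set B := b ^ Nat.log b (M' - M)
  set z : ℕ → ℝ := fun j => Int.fract ((b : ℝ) ^ j * x)
  have hB₀ : 0 < B := pow_pos hb₀ _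
  have hword : ∀ e ≤ B, |∑ j ∈ Ico M N, prefixDeviation B ⌊B * z j⌋₊ e| ≤ _ := fun e he =>
    abs_sum_prefixDeviation_floor_le hb₀ hx hreg hMN hN he
  have hround : ∑ _j ∈ Ico M N, (1 / B : ℝ) ≤ b := by
    have hlt : M' - M < B * b := Nat.lt_pow_succ_log_self hb _
    have hlength : ((N - M : ℕ) : ℝ) ≤ B * b := mod_cast (show N - M ≤ B * b by lia)
    rw [sum_const, Nat.card_Ico, nsmul_eq_mul, mul_one_div, div_le_iff₀' (mod_cast hB₀)]
    exact hlength
  have hBα : (B : ℝ) * α ≤ B := mul_le_of_le_one_right (Nat.cast_nonneg B) hα.2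
  rw [abs_le]
  constructor
  · calc -(400 * b * √(M' - M : ℕ) + b)
        ≤ ∑ j ∈ Ico M N, prefixDeviation B ⌊B * z j⌋₊ ⌊B * α⌋₊ - ∑ _j ∈ Ico M N, (1 / B : ℝ) := by
          linarith [neg_le_of_abs_le (hword _ (Nat.floor_le_of_le hBα))]
      _ ≤ countDeviation z α M N := by
          rw [← sum_sub_distrib]
          exact sum_le_sum fun j _ => prefixDeviation_floor_sub_le hB₀ (z j) α
  · calc countDeviation z α M N
        ≤ ∑ j ∈ Ico M N, prefixDeviation B ⌊B * z j⌋₊ ⌈B * α⌉₊ + ∑ _j ∈ Ico M N, (1 / B : ℝ) := by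
          rw [← sum_add_distrib]
          exact sum_le_sum fun j _ => le_prefixDeviation_ceil_add hB₀ (Int.fract_nonneg _) hα.1
      _ ≤ 400 * b * √(M' - M : ℕ) + b :=
          add_le_add (le_of_abs_le (hword _ (Nat.ceil_le.2 hBα))) hround

theorem log_add_one_le_mul_sqrt (hb : 1 < b) {H : ℕ} (hH : H ≠ 0) :
    (Nat.log b H + 1 : ℝ) ≤ 5 / 2 * √H := by
  have hpow : (49 / 25 : ℝ) ^ Nat.log b H ≤ H := calc
    (49 / 25 : ℝ) ^ Nat.log b H ≤ (b : ℝ) ^ Nat.log b H := by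
      gcongr
      linarith [show (2 : ℝ) ≤ b from mod_cast hb]
    _ ≤ H := mod_cast Nat.pow_log_le_self b hH
  have hsqrt : (7 / 5 : ℝ) ^ Nat.log b H ≤ √H := by
    refine Real.le_sqrt_of_sq_le ?_
    rw [pow_right_comm]
    norm_num [hpow]
  have hbernoulli := one_add_mul_le_pow (a := (2 / 5 : ℝ)) (by norm_num) (Nat.log b H)
  norm_num at hbernoulli
  linarith

theorem abs_countDeviation_le_of_le_add_one (hb : 1 < b) (hx : 0 ≤ x)
    (hreg : digitWord b M M' x ∉ irregularWords b (M' - M)) (hα : α ∈ Set.Icc 0 1) (hM : M < M')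
    (hMN : M ≤ N) (hN : N ≤ M' + 1) :
    |countDeviation (fun j => Int.fract ((b : ℝ) ^ j * x)) α M N| ≤ 403 * b * √(M' - M : ℕ) := by
  set H := M' - M
  set K := Nat.log b H
  have hKH : K ≤ H := Nat.log_le_self b H
  obtain ⟨L, hML, hLN, hL, hNL⟩ : ∃ L, M ≤ L ∧ L ≤ N ∧ L + K ≤ M' ∧ N - L ≤ K + 1 :=
    ⟨min N (M' - K), by lia, by lia, by lia, by lia⟩
  have hfull := abs_countDeviation_le_of_add_log_le hb hx hreg hα hML hL
  have htail := abs_countDeviation_le (fun j => Int.fract ((b : ℝ) ^ j * x)) hα L N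
  have hlength : ((N - L : ℕ) : ℝ) ≤ K + 1 := mod_cast hNL
  have hlog : (K + 1 : ℝ) ≤ 5 / 2 * √H := log_add_one_le_mul_sqrt hb (by lia)
  have hb₂ : (2 : ℝ) ≤ b := mod_cast hb
  have hsqrt : 1 ≤ √(H : ℝ) := Real.one_le_sqrt.2 (mod_cast (by lia : 1 ≤ H))
  rw [← countDeviation_add_countDeviation _ _ hML hLN]
  calc |countDeviation _ α M L + countDeviation _ α L N|
      ≤ |countDeviation _ α M L| + |countDeviation _ α L N| := abs_add_le _ _
    _ ≤ (400 * b * √H + b) + 5 / 2 * √H := by gcongr; exact htail.trans (hlength.trans hlog)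
    _ ≤ 400 * b * √H + b * √H + 5 / 4 * b * √H := by nlinarith
    _ ≤ 403 * b * √H := by nlinarith

end RegularStage

section GeometricBlocks

variable {D : ℕ → ℝ} {c : ℕ → ℕ} {A C : ℝ}

theorem two_mul_sqrt_le_sqrt_of_four_mul_le {m n : ℕ} (hmn : 4 * m ≤ n) :
    2 * √(m : ℝ) ≤ √n := by
  refine Real.le_sqrt_of_sq_le ?_
  rw [mul_pow, Real.sq_sqrt (Nat.cast_nonneg m)]
  norm_num
  exact_mod_cast hmn

theorem abs_le_add_two_mul_sqrt_of_four_mul_le (hA : 0 ≤ A) (hc : ∀ i, 4 * c i ≤ c (i + 1))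
    (hzero : |D (c 0 + 1)| ≤ C)
    (hstep : ∀ i, |D (c (i + 1) + 1) - D (c i + 1)| ≤ A * √(c (i + 1))) (i : ℕ) :
    |D (c i + 1)| ≤ C + 2 * A * √(c i) := by
  induction i with
  | zero => exact hzero.trans (le_add_of_nonneg_right (by positivity))
  | succ i ih =>
    have htriangle := abs_sub_abs_le_abs_sub (D (c (i + 1) + 1)) (D (c i + 1))
    calc |D (c (i + 1) + 1)| ≤ C + A * (2 * √(c i)) + A * √(c (i + 1)) := by
          linarith [hstep i]
      _ ≤ C + A * √(c (i + 1)) + A * √(c (i + 1)) := by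
          gcongr
          exact two_mul_sqrt_le_sqrt_of_four_mul_le (hc i)
      _ = C + 2 * A * √(c (i + 1)) := by ring

theorem abs_le_add_mul_sqrt_of_geometric_blocks (hA : 0 ≤ A) (hc₀ : 1 ≤ c 0)
    (hc : ∀ i, 4 * c i ≤ c (i + 1)) (hc' : ∀ i, c (i + 1) ≤ 4 * c i + 3)
    (hzero : |D (c 0 + 1)| ≤ C)
    (hstep : ∀ i N, c i + 1 ≤ N → N ≤ c (i + 1) + 1 → |D N - D (c i + 1)| ≤ A * √(c (i + 1)))
    {N : ℕ} (hN : c 0 < N) :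
    |D N| ≤ C + 4 * A * √N := by
  have hpos : ∀ i, 1 ≤ c i := fun i => by
    induction i with
    | zero => exact hc₀
    | succ i ih => have := hc i; lia
  have hmono : StrictMono c := strictMono_nat_of_lt_succ fun i => by
    have := hpos i
    have := hc i
    lia
  obtain ⟨i, hiN, hNi⟩ := hmono.exists_between_of_tendsto_atTop hmono.tendsto_atTop hN
  have hpartial := abs_le_add_two_mul_sqrt_of_four_mul_le hA hc hzero
    (fun i => hstep i _ (by have := hmono i.lt_succ_self; lia) le_rfl) i
  have hblock := hstep i N hiN (hNi.trans (Nat.le_succ _))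
  have hlower : √(c i : ℝ) ≤ √N := Real.sqrt_le_sqrt (mod_cast hiN.le)
  have hupper : √(c (i + 1) : ℝ) ≤ 2 * √N := calc
    √(c (i + 1) : ℝ) ≤ √(2 ^ 2 * N) := by
      gcongr
      have := hc' i
      exact_mod_cast (by lia : c (i + 1) ≤ 2 ^ 2 * N)
    _ = 2 * √N := by rw [Real.sqrt_mul (by norm_num), Real.sqrt_sq two_pos.le]
  have htriangle := abs_sub_abs_le_abs_sub (D N) (D (c i + 1))
  calc |D N| ≤ C + 2 * A * √(c i) + A * √(c (i + 1)) := by linarith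
    _ ≤ C + 2 * A * √N + A * (2 * √N) := by gcongr
    _ = C + 4 * A * √N := by ring

end GeometricBlocks

/-! ### Discrepancy -/

theorem abs_countDeviation_zero_le {b : ℕ} (hb : 1 < b) {x : ℝ} (hx : 0 ≤ x)
    (hreg : HasRegularStages b x) {α : ℝ} (hα : α ∈ Set.Icc 0 1) {N : ℕ}
    (hN : stageCut b (b - 2) < N) :
    |countDeviation (fun j => Int.fract ((b : ℝ) ^ j * x)) α 0 N| ≤
      (stageCut b (b - 2) + 1 : ℕ) + 4 * (403 * b) * √N := by
  refine abs_le_add_mul_sqrt_of_geometric_blocks (c := fun i => stageCut b (b - 2 + i))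
    (D := countDeviation _ α 0) (by positivity) (one_le_stageCut hb (by lia))
    (fun i => four_mul_stageCut_le hb _) (fun i => stageCut_succ_le hb _)
    (abs_countDeviation_le _ hα _ _) (fun i n hin hni => ?_) hN
  have hi : b ≤ b - 2 + i + 2 := by lia
  have hpos := one_le_stageCut hb hi
  have hmul := four_mul_stageCut_le hb (b - 2 + i)
  rw [← countDeviation_add_countDeviation _ _ (Nat.zero_le _) hin, add_sub_cancel_left]
  calc |countDeviation _ α (stageCut b (b - 2 + i) + 1) n|
      ≤ 403 * b * √(stageCut b (b - 2 + i + 1) - (stageCut b (b - 2 + i) + 1) : ℕ) :=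
        abs_countDeviation_le_of_le_add_one hb hx (hreg _ hi) hα (by lia) hin hni
    _ ≤ 403 * b * √(stageCut b (b - 2 + i + 1)) := by gcongr; exact Nat.sub_le _ _

theorem disc_le_of_abs_countDeviation_le {z : ℕ → ℝ} {N : ℕ} (hN : 0 < N) {E : ℝ}
    (hE : ∀ α ∈ Set.Icc (0 : ℝ) 1, |countDeviation z α 0 N| ≤ E) :
    disc N z ≤ 2 * E / N := by
  have hN' : (0 : ℝ) < N := mod_cast hN
  have : Nonempty {p : ℝ × ℝ // 0 ≤ p.1 ∧ p.1 < p.2 ∧ p.2 ≤ 1} := ⟨⟨(0, 1), by norm_num⟩⟩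
  refine ciSup_le fun ⟨⟨α, β⟩, hα, hαβ, hβ⟩ => ?_
  have hcount : (#{j ∈ range N | α ≤ z j ∧ z j < β} : ℝ) - N * (β - α) =
      countDeviation z β 0 N - countDeviation z α 0 N := by
    have hconst : N * (β - α) = ∑ _j ∈ range N, (β - α) := by simp [mul_sub]
    rw [countDeviation, countDeviation, Nat.Ico_zero_eq_range, natCast_card_filter, hconst,
      ← sum_sub_distrib, ← sum_sub_distrib]
    refine sum_congr rfl fun j _ => ?_
    rcases lt_or_ge (z j) α with hj | hj
    · simp [hj, hj.trans hαβ, hj.not_ge]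
    · simp only [hj, true_and, hj.not_gt, if_false]
      ring
  calc |(#{j ∈ range N | α ≤ z j ∧ z j < β} : ℝ) / N - (β - α)|
      = |countDeviation z β 0 N - countDeviation z α 0 N| / N := by
        rw [← hcount, ← abs_of_pos hN', ← abs_div, abs_of_pos hN', sub_div,
          mul_div_cancel_left₀ _ hN'.ne']
    _ ≤ (|countDeviation z β 0 N| + |countDeviation z α 0 N|) / N := by gcongr; exact abs_sub _ _
    _ ≤ (E + E) / N := by
        gcongr
        · exact hE β ⟨hα.trans hαβ.le, hβ⟩
        · exact hE α ⟨hα, hαβ.le.trans hβ⟩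
    _ = 2 * E / N := by rw [two_mul]

theorem HasRegularStages.exists_disc_le {b : ℕ} {x : ℝ} (hreg : HasRegularStages b x)
    (hb : 1 < b) (hx : 0 ≤ x) :
    ∃ N₀ : ℕ, ∀ N, N₀ ≤ N → disc N (fun j => Int.fract ((b : ℝ) ^ j * x)) ≤ 3433 * b / √N := by
  set C := stageCut b (b - 2) + 1
  refine ⟨C ^ 2, fun N hN => ?_⟩
  have hCN : C ≤ N := (Nat.le_self_pow two_ne_zero C).trans hN
  have hN₀ : (0 : ℝ) < N := mod_cast (by lia : 0 < N)
  have hsqrt : 0 < √(N : ℝ) := Real.sqrt_pos.2 hN₀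
  have hC_sqrt : (C : ℝ) ≤ √N := Real.le_sqrt_of_sq_le (mod_cast hN)
  have hb' : (2 : ℝ) ≤ b := mod_cast hb
  calc disc N (fun j => Int.fract ((b : ℝ) ^ j * x)) ≤ 2 * (C + 4 * (403 * b) * √N) / N :=
        disc_le_of_abs_countDeviation_le (by lia) fun α hα =>
          abs_countDeviation_zero_le hb hx hreg hα hCN
    _ ≤ 3433 * b * √N / N := by gcongr ?_ / _; nlinarith
    _ = 3433 * b / √N := by rw [mul_div_assoc, Real.sqrt_div_self, ← div_eq_mul_inv]

theorem tendsto_disc_zero_of_le_div_sqrt {z : ℕ → ℝ} {A : ℝ} {N₀ : ℕ}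
    (hdisc : ∀ N, N₀ ≤ N → disc N z ≤ A / √N) :
    Filter.Tendsto (fun N => disc N z) Filter.atTop (nhds 0) :=
  squeeze_zero' (.of_forall fun _ => Real.iSup_nonneg fun _ => abs_nonneg _)
    (Filter.eventually_atTop.2 ⟨N₀, hdisc⟩)
    (tendsto_const_nhds.div_atTop (Real.tendsto_sqrt_atTop.comp tendsto_natCast_atTop_atTop))

end

theorem stmt0 :
    ∃ x : ℝ, ∀ b : ℕ, 2 ≤ b →
      (Filter.Tendsto (fun N => disc N (fun j => Int.fract ((b : ℝ) ^ j * x)))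
        Filter.atTop (nhds 0)) ∧
      ∃ N₀ : ℕ, ∀ N : ℕ, N₀ ≤ N →
        disc N (fun j => Int.fract ((b : ℝ) ^ j * x)) ≤ 3433 * b / Real.sqrt N := by
  obtain ⟨x, hx, hreg⟩ := exists_hasRegularStages
  refine ⟨x, fun b hb => ?_⟩
  obtain ⟨N₀, hN₀⟩ := (hreg b hb).exists_disc_le hb hx
  exact ⟨tendsto_disc_zero_of_le_div_sqrt hN₀, N₀, hN₀⟩
end

section
/- Let b ≥ 2 be an integer, let h and N be positive integers with N ≥ h, and assume ε > 0 satisfies (2/3)·ε·⌊N/h⌋^{−1/2} ≤ 1/(b·h^5). Then for all integers M ≥ 0 and a with 0 ≤ a < b^h, for any subinterval A of [0,1] and any positive integer j_0, μ({x ∈ A : F(M + j_0, N, a·b^{−h}, (a+1)·b^{−h}, ({b^j x})_{j≥0}) > ε·√(hN)}) ≤ μ(A)·2h·exp(−ε²·b·h^5 / 529) + 2·b^{−j_0}. -/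
open scoped Classical

/-- `F M N α₁ α₂ x = |#{j : M ≤ j < M+N, α₁ ≤ x_j < α₂} − (α₂ − α₁)·N|`. -/
noncomputable def F (M N : ℕ) (α₁ α₂ : ℝ) (x : ℕ → ℝ) : ℝ :=
  |(((Finset.Ico M (M + N)).filter fun j => α₁ ≤ x j ∧ x j < α₂).card : ℝ) -
    (α₂ - α₁) * N|

/-- The sequence `({b^j x})_{j ≥ 0}` of fractional parts. -/
noncomputable def bseq (b : ℕ) (x : ℝ) : ℕ → ℝ := fun j => Int.fract ((b : ℝ) ^ j * x)

/-!
Put `K = M + j₀` and split the indices `K + j`, `0 ≤ j < N`, by the residue `r` of `j` modulo `h`.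
Along the class of `r`, whether `b ^ (K + j) x` visits the interval is read off successive digits
of `b ^ (K + r) x` in base `b ^ h`, and these are exactly independent and uniform on every interval
whose length is an integral multiple of `b ^ (-(K + r))`. So on each `b`-adic cell of length
`b ^ (-j₀)` the count along a class is binomial and obeys Bernstein's inequality. By Cauchy–Schwarz
the numbers `n_r` of indices in the classes satisfy `∑ √n_r ≤ √(h N)`, hence a discrepancy above
`ε √(h N)` forces a deviation above `ε √n_r` in some class. The `b`-adic cells fill `A` up to end
pieces of total length at most `b ^ (-j₀)`.

In the constant `529`, the variance contributes `526 = 2 * 263` through `b h ^ 5 ≤ 263 b ^ h`, and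
the condition on `ε` bounds the linear term of Bernstein's denominator by one more unit.
-/

open MeasureTheory ProbabilityTheory Set

section SubgammaTail

/-- `X` is sub-gamma on both sides with variance factor `v` and scale `c` under the finite measure
`μ`: its moment generating function is at most `μ(Ω) exp (v t² / (2 (1 - c |t|)))` wherever
`c |t| < 1`. It is the hypothesis under which Bernstein's inequality holds. The measure need not be
a probability measure, so that it can be the restriction of Lebesgue measure to an interval. -/
structure HasSubgammaMGF {Ω : Type*} [MeasurableSpace Ω] (X : Ω → ℝ) (v c : ℝ) (μ : Measure Ω) :
    Prop where
  integrable_exp_mul : ∀ t, c * |t| < 1 → Integrable (fun ω => Real.exp (t * X ω)) μ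
  mgf_le : ∀ t, c * |t| < 1 →
    mgf X μ t ≤ μ.real univ * Real.exp (v * t ^ 2 / (2 * (1 - c * |t|)))

namespace HasSubgammaMGF

variable {Ω : Type*} [MeasurableSpace Ω] {X : Ω → ℝ} {v c u : ℝ} {μ : Measure Ω}

lemma neg (hX : HasSubgammaMGF X v c μ) : HasSubgammaMGF (-X) v c μ where
  integrable_exp_mul t ht := by
    simpa using hX.integrable_exp_mul (-t) (by rwa [abs_neg])
  mgf_le t ht := by
    simpa [mgf_neg] using hX.mgf_le (-t) (by rwa [abs_neg])

variable [IsFiniteMeasure μ]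

lemma measureReal_ge_le (hX : HasSubgammaMGF X v c μ) (hv : 0 < v) (hc : 0 ≤ c) (hu : 0 ≤ u) :
    μ.real {ω | u ≤ X ω} ≤ μ.real univ * Real.exp (-u ^ 2 / (2 * (v + c * u))) := by
  -- Chosen so that `1 - c t = v / (v + c u)`, which collapses the exponent to `-t u / 2`.
  set t := u / (v + c * u) with ht
  have ht0 : 0 ≤ t := by positivity
  have hct : 1 - c * |t| = v / (v + c * u) := by
    rw [abs_of_nonneg ht0, ht]
    field_simp
    ring
  have hct1 : c * |t| < 1 := by
    rw [← sub_pos, hct]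
    positivity
  calc μ.real {ω | u ≤ X ω} ≤ Real.exp (-t * u) * mgf X μ t :=
        measure_ge_le_exp_mul_mgf u ht0 (hX.integrable_exp_mul t hct1)
    _ ≤ Real.exp (-t * u) * (μ.real univ * Real.exp (v * t ^ 2 / (2 * (1 - c * |t|)))) := by
        gcongr
        exact hX.mgf_le t hct1
    _ = μ.real univ * Real.exp (-t * u + v * t ^ 2 / (2 * (1 - c * |t|))) := by
        rw [Real.exp_add]
        ring
    _ = μ.real univ * Real.exp (-u ^ 2 / (2 * (v + c * u))) := by
        rw [hct, ht]
        congr 2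
        field_simp
        ring

lemma measureReal_abs_ge_le (hX : HasSubgammaMGF X v c μ) (hv : 0 < v) (hc : 0 ≤ c) (hu : 0 ≤ u) :
    μ.real {ω | u ≤ |X ω|} ≤ μ.real univ * (2 * Real.exp (-u ^ 2 / (2 * (v + c * u)))) := by
  have hunion : {ω | u ≤ |X ω|} = {ω | u ≤ X ω} ∪ {ω | u ≤ (-X) ω} := by
    ext ω
    simp [le_abs]
  calc μ.real {ω | u ≤ |X ω|} ≤ μ.real {ω | u ≤ X ω} + μ.real {ω | u ≤ (-X) ω} :=
        hunion ▸ measureReal_union_le _ _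
    _ ≤ _ := add_le_add (hX.measureReal_ge_le hv hc hu) (hX.neg.measureReal_ge_le hv hc hu)
    _ = _ := by ring

end HasSubgammaMGF

lemma exp_sub_one_sub_le {t : ℝ} (ht : 1 / 3 * |t| < 1) :
    Real.exp t - 1 - t ≤ t ^ 2 / (2 * (1 - 1 / 3 * |t|)) := by
  have hexp : HasSum (fun n : ℕ => t ^ (n + 2) / (n + 2).factorial) (Real.exp t - 1 - t) := by
    have h := (hasSum_nat_add_iff' 2).2 (NormedSpace.expSeries_div_hasSum_exp t)
    simpa [← Real.exp_eq_exp_ℝ, Finset.sum_range_succ, sub_sub] using h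
  have hgeom : HasSum (fun n : ℕ => t ^ 2 / 2 * (1 / 3 * |t|) ^ n)
      (t ^ 2 / 2 * (1 - 1 / 3 * |t|)⁻¹) :=
    (hasSum_geometric_of_lt_one (by positivity) ht).mul_left _
  have hfactorial (n : ℕ) : (2 * 3 ^ n : ℝ) ≤ (n + 2).factorial := by
    rw [add_comm n]
    exact_mod_cast Nat.factorial_mul_pow_le_factorial (m := 2) (n := n)
  calc Real.exp t - 1 - t ≤ t ^ 2 / 2 * (1 - 1 / 3 * |t|)⁻¹ := by
        refine hasSum_le (fun n => ?_) hexp hgeom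
        calc t ^ (n + 2) / (n + 2).factorial ≤ |t| ^ (n + 2) / (n + 2).factorial := by
              gcongr ?_ / _
              rw [← abs_pow]
              exact le_abs_self _
          _ ≤ |t| ^ (n + 2) / (2 * 3 ^ n) := by
              gcongr
              exact hfactorial n
          _ = t ^ 2 / 2 * (1 / 3 * |t|) ^ n := by
              rw [pow_add, sq_abs, mul_pow, div_pow, one_pow]
              field_simp
    _ = t ^ 2 / (2 * (1 - 1 / 3 * |t|)) := by
        rw [← div_eq_mul_inv, div_div]

end SubgammaTail

section VisitCount

lemma intervalIntegral_comp_mul_of_periodic {E : Type*} [NormedAddCommGroup E] [NormedSpace ℝ E]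
    {f : ℝ → E} (hf : f.Periodic 1) (hint : ∀ u v, IntervalIntegrable f volume u v)
    {m ℓ : ℝ} {p : ℤ} (hm : m ≠ 0) (hp : m * ℓ = p) (u : ℝ) :
    ∫ x in u..u + ℓ, f (m * x) = ℓ • ∫ x in (0 : ℝ)..1, f x := by
  have hend : m * (u + ℓ) = m * u + p • (1 : ℝ) := by
    rw [mul_add, hp, zsmul_one]
  rw [intervalIntegral.integral_comp_mul_left f hm, hend,
    hf.intervalIntegral_add_zsmul_eq p _ hint, hf.intervalIntegral_add_eq _ 0, zero_add,
    ← Int.cast_smul_eq_zsmul ℝ, smul_smul, ← hp, inv_mul_cancel_left₀ hm]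

/-- The set of reals whose fractional part has leading base-`q` digit `a`. -/
def digitCell (q a : ℕ) : Set ℝ := {x | (a : ℝ) / q ≤ Int.fract x ∧ Int.fract x < (a + 1) / q}

/-- The number of visits of `x, q x, …, q ^ (n - 1) x` to `digitCell q a`, that is, of occurrences
of `a` among the first `n` base-`q` digits of the fractional part of `x`. It is real-valued, being
used as a random variable. -/
noncomputable def visitCount (q a n : ℕ) (x : ℝ) : ℝ :=
  ∑ i ∈ Finset.range n, (digitCell q a).indicator 1 ((q : ℝ) ^ i * x)

variable {q a n : ℕ} {s m ℓ : ℝ}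

lemma measurableSet_digitCell : MeasurableSet (digitCell q a) :=
  (measurableSet_le measurable_const measurable_fract).inter
    (measurableSet_lt measurable_fract measurable_const)

lemma measurable_visitCount : Measurable (visitCount q a n) :=
  Finset.measurable_sum _ fun _ _ =>
    (measurable_one.indicator measurableSet_digitCell).comp (measurable_const_mul _)

lemma visitCount_mem_Icc (x : ℝ) : visitCount q a n x ∈ Icc (0 : ℝ) n := by
  refine ⟨Finset.sum_nonneg fun _ _ => indicator_nonneg (fun _ _ => zero_le_one) _, ?_⟩
  simpa [visitCount] using Finset.sum_le_card_nsmul (Finset.range n) _ (1 : ℝ) fun i _ =>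
    indicator_le_self' (s := digitCell q a) (f := 1) (fun _ _ => zero_le_one) ((q : ℝ) ^ i * x)

lemma visitCount_succ (x : ℝ) :
    visitCount q a (n + 1) x = (digitCell q a).indicator 1 x + visitCount q a n (q * x) := by
  simp only [visitCount, Finset.sum_range_succ', pow_zero, one_mul, pow_succ, mul_assoc]
  ring

lemma visitCount_periodic : (visitCount q a n).Periodic 1 := by
  intro x
  refine Finset.sum_congr rfl fun i _ => ?_
  have hfract : Int.fract ((q : ℝ) ^ i * (x + 1)) = Int.fract ((q : ℝ) ^ i * x) := by
    rw [mul_add, mul_one, ← Nat.cast_pow, Int.fract_add_natCast]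
  have hmem : (q : ℝ) ^ i * (x + 1) ∈ digitCell q a ↔ (q : ℝ) ^ i * x ∈ digitCell q a := by
    simp only [digitCell, mem_ofPred_eq, hfract]
  by_cases hx : (q : ℝ) ^ i * x ∈ digitCell q a <;> simp [hx, hmem]

lemma integrable_exp_visitCount_mul {μ : Measure ℝ} [IsFiniteMeasure μ] :
    Integrable (fun x => Real.exp (s * visitCount q a n (m * x))) μ :=
  integrable_exp_mul_of_mem_Icc
    (measurable_visitCount.comp (measurable_const_mul m)).aemeasurable
    (ae_of_all _ fun x => visitCount_mem_Icc (m * x))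

lemma intervalIntegrable_exp_visitCount_mul (u v : ℝ) :
    IntervalIntegrable (fun x => Real.exp (s * visitCount q a n (m * x))) volume u v :=
  ⟨integrable_exp_visitCount_mul, integrable_exp_visitCount_mul⟩

lemma integral_exp_visitCount_mul {p : ℤ} (hm : m ≠ 0) (hp : m * ℓ = p) (u : ℝ) :
    ∫ x in u..u + ℓ, Real.exp (s * visitCount q a n (m * x)) =
      ℓ * ∫ x in (0 : ℝ)..1, Real.exp (s * visitCount q a n x) := by
  refine intervalIntegral_comp_mul_of_periodic (f := fun x => Real.exp (s * visitCount q a n x))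
    (fun x => by simp only [visitCount_periodic x]) (fun u v => ?_) hm hp u
  simpa using intervalIntegrable_exp_visitCount_mul (m := 1) u v

lemma intervalIntegral_indicator_digitCell {E : Type*} [NormedAddCommGroup E] [NormedSpace ℝ E]
    (ha : a < q) (g : ℝ → E) :
    ∫ x in (0 : ℝ)..1, (digitCell q a).indicator g x =
      ∫ x in (a : ℝ) / q..a / q + 1 / q, g x := by
  have hq : (0 : ℝ) < q := by exact_mod_cast (Nat.zero_le a).trans_lt ha
  have haq : (a : ℝ) / q + 1 / q ≤ 1 := by
    rw [← add_div, div_le_one hq]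
    exact_mod_cast ha
  have hcell : Ico (0 : ℝ) 1 ∩ digitCell q a = Ico ((a : ℝ) / q) (a / q + 1 / q) := by
    ext x
    simp only [digitCell, mem_inter_iff, mem_Ico, mem_ofPred_eq, ← add_div]
    constructor
    · rintro ⟨hx, hxa⟩
      rwa [Int.fract_eq_self.2 hx] at hxa
    · rintro ⟨hx₁, hx₂⟩
      have hx : 0 ≤ x ∧ x < 1 :=
        ⟨(by positivity : (0 : ℝ) ≤ a / q).trans hx₁, hx₂.trans_le (add_div (a : ℝ) 1 q ▸ haq)⟩
      rw [Int.fract_eq_self.2 hx]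
      exact ⟨hx, hx₁, hx₂⟩
  rw [intervalIntegral.integral_of_le zero_le_one, ← integral_Ico_eq_integral_Ioc,
    setIntegral_indicator measurableSet_digitCell, hcell, integral_Ico_eq_integral_Ioc,
    intervalIntegral.integral_of_le (by simp)]

lemma integral_exp_visitCount (ha : a < q) :
    ∫ x in (0 : ℝ)..1, Real.exp (s * visitCount q a n x) =
      (1 + 1 / q * (Real.exp s - 1)) ^ n := by
  have hq : (q : ℝ) ≠ 0 := by exact_mod_cast ((Nat.zero_le a).trans_lt ha).ne'
  induction n with
  | zero => simp [visitCount]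
  | succ n ih =>
    set G : ℝ → ℝ := fun x => Real.exp (s * visitCount q a n (q * x)) with hG
    have hGint (u v : ℝ) : IntervalIntegrable G volume u v :=
      intervalIntegrable_exp_visitCount_mul u v
    have hsplit (x : ℝ) : Real.exp (s * visitCount q a (n + 1) x) =
        G x + (Real.exp s - 1) * (digitCell q a).indicator G x := by
      rw [visitCount_succ, mul_add, Real.exp_add]
      by_cases hx : x ∈ digitCell q a
      · simp only [indicator_of_mem hx, Pi.one_apply, mul_one, hG]
        ring
      · simp [hx, hG]
    have hcell : ∫ x in (0 : ℝ)..1, (digitCell q a).indicator G x =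
        1 / q * (1 + 1 / q * (Real.exp s - 1)) ^ n := by
      rw [intervalIntegral_indicator_digitCell ha, hG,
        integral_exp_visitCount_mul (p := 1) hq (by field_simp; simp), ih]
    have hunit : ∫ x in (0 : ℝ)..1, G x = (1 + 1 / q * (Real.exp s - 1)) ^ n := by
      have h := integral_exp_visitCount_mul (q := q) (a := a) (n := n) (s := s) (p := q) hq
        (mul_one _) 0
      rwa [zero_add, one_mul, ih] at h
    have hindicator : IntervalIntegrable ((digitCell q a).indicator G) volume 0 1 :=
      ⟨(hGint 0 1).1.indicator measurableSet_digitCell,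
        (hGint 0 1).2.indicator measurableSet_digitCell⟩
    simp only [hsplit]
    rw [intervalIntegral.integral_add (hGint 0 1) (hindicator.const_mul _),
      intervalIntegral.integral_const_mul, hcell, hunit]
    ring

lemma mgf_visitCount_mul_sub_le {p : ℤ} (ha : a < q) (hm : m ≠ 0) (hℓ : 0 ≤ ℓ) (hp : m * ℓ = p)
    (u t : ℝ) :
    mgf (fun x => visitCount q a n (m * x) - n / q) (volume.restrict (Ioc u (u + ℓ))) t ≤
      ℓ * Real.exp (n / q * (Real.exp t - 1 - t)) := by
  have hq : (1 : ℝ) ≤ q := by exact_mod_cast (Nat.zero_le a).trans_lt ha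
  have hmgf : mgf (fun x => visitCount q a n (m * x)) (volume.restrict (Ioc u (u + ℓ))) t =
      ℓ * (1 + 1 / q * (Real.exp t - 1)) ^ n := by
    rw [mgf, ← intervalIntegral.integral_of_le (by simpa using hℓ),
      integral_exp_visitCount_mul hm hp, integral_exp_visitCount ha]
  have hbase : 0 ≤ 1 + 1 / q * (Real.exp t - 1) := by
    have : 1 / (q : ℝ) ≤ 1 := div_le_one_of_le₀ hq (by positivity)
    have : 0 ≤ 1 / (q : ℝ) * Real.exp t := by positivity
    linarith
  have hpow : (1 + 1 / q * (Real.exp t - 1)) ^ n ≤ Real.exp (n * (1 / q * (Real.exp t - 1))) := by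
    rw [Real.exp_nat_mul]
    gcongr
    linarith [Real.add_one_le_exp (1 / q * (Real.exp t - 1))]
  calc mgf (fun x => visitCount q a n (m * x) - n / q) (volume.restrict (Ioc u (u + ℓ))) t
      = ℓ * (1 + 1 / q * (Real.exp t - 1)) ^ n * Real.exp (t * -(n / q)) := by
        rw [← hmgf, ← mgf_add_const]
        simp only [sub_eq_add_neg]
    _ ≤ ℓ * Real.exp (n * (1 / q * (Real.exp t - 1))) * Real.exp (t * -(n / q)) := by gcongr
    _ = ℓ * Real.exp (n / q * (Real.exp t - 1 - t)) := by
        rw [mul_assoc, ← Real.exp_add]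
        congr 2
        ring

lemma hasSubgammaMGF_visitCount_mul_sub {p : ℤ} (ha : a < q) (hm : m ≠ 0) (hℓ : 0 ≤ ℓ)
    (hp : m * ℓ = p) (u : ℝ) :
    HasSubgammaMGF (fun x => visitCount q a n (m * x) - n / q) (n / q) (1 / 3)
      (volume.restrict (Ioc u (u + ℓ))) where
  integrable_exp_mul t _ := by
    simp only [mul_sub, Real.exp_sub]
    exact integrable_exp_visitCount_mul.div_const _
  mgf_le t ht := by
    have hmass : (volume.restrict (Ioc u (u + ℓ))).real univ = ℓ := by
      simp [hℓ]
    rw [hmass, mul_div_assoc]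
    refine (mgf_visitCount_mul_sub_le ha hm hℓ hp u t).trans ?_
    gcongr
    exact exp_sub_one_sub_le ht

lemma measureReal_visitCount_deviation_le {p : ℤ} {ε : ℝ} (ha : a < q) (hn : 0 < n) (hm : m ≠ 0)
    (hℓ : 0 ≤ ℓ) (hp : m * ℓ = p) (hε : 0 ≤ ε) (u : ℝ) :
    volume.real (Ioc u (u + ℓ) ∩ {x | ε * √n < |visitCount q a n (m * x) - n / q|}) ≤
      ℓ * (2 * Real.exp (-ε ^ 2 / (2 / q + 2 / 3 * ε / √n))) := by
  have hq : (0 : ℝ) < q := by exact_mod_cast (Nat.zero_le a).trans_lt ha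
  have hn' : (0 : ℝ) < n := by exact_mod_cast hn
  set X : ℝ → ℝ := fun x => visitCount q a n (m * x) - n / q
  have hX := hasSubgammaMGF_visitCount_mul_sub (n := n) ha hm hℓ hp u
  have hexponent : -(ε * √n) ^ 2 / (2 * (n / q + 1 / 3 * (ε * √n))) =
      -ε ^ 2 / (2 / q + 2 / 3 * ε / √n) := by
    obtain ⟨r, hr, hrn⟩ : ∃ r : ℝ, 0 < r ∧ (n : ℝ) = r ^ 2 :=
      ⟨√n, Real.sqrt_pos.2 hn', (Real.sq_sqrt hn'.le).symm⟩
    rw [hrn, Real.sqrt_sq hr.le]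
    field_simp
  calc volume.real (Ioc u (u + ℓ) ∩ {x | ε * √n < |X x|})
      ≤ volume.real ({x | ε * √n ≤ |X x|} ∩ Ioc u (u + ℓ)) :=
        measureReal_mono (fun x ⟨hxu, hxX⟩ => ⟨mem_ofPred.2 (mem_ofPred.1 hxX).le, hxu⟩)
          (measure_ne_top_of_subset inter_subset_right measure_Ioc_lt_top.ne)
    _ = (volume.restrict (Ioc u (u + ℓ))).real {x | ε * √n ≤ |X x|} :=
        (measureReal_restrict_apply' measurableSet_Ioc).symm
    _ ≤ _ := hX.measureReal_abs_ge_le (by positivity) (by norm_num) (by positivity)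
    _ = ℓ * (2 * Real.exp (-ε ^ 2 / (2 / q + 2 / 3 * ε / √n))) := by
        rw [hexponent]
        simp [hℓ]

end VisitCount

section Grid

variable {A B : Set ℝ} {δ P : ℝ}

lemma measureReal_inter_le_of_cells (hδ : 0 ≤ δ)
    (hB : ∀ c : ℤ, volume.real (Ioc (c * δ) (c * δ + δ) ∩ B) ≤ δ * P) (c : ℤ) (n : ℕ) :
    volume.real (Ioc (c * δ) (c * δ + n * δ) ∩ B) ≤ n * δ * P := by
  induction n with
  | zero => simp
  | succ n ih =>
    have hcell := hB (c + n)
    push_cast [add_mul] at hcell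
    have hunion : Ioc (c * δ) (c * δ + (n + 1 : ℕ) * δ) = Ioc (c * δ) (c * δ + n * δ) ∪
        Ioc (c * δ + n * δ) (c * δ + n * δ + δ) := by
      rw [Ioc_union_Ioc_eq_Ioc (le_add_of_nonneg_right (by positivity)) (by linarith)]
      push_cast
      ring_nf
    rw [hunion, union_inter_distrib_right]
    refine (measureReal_union_le _ _).trans ((add_le_add ih hcell).trans_eq ?_)
    push_cast
    ring

lemma exists_grid_Icc_subset (hδ : 0 < δ) {α β : ℝ} (hαβ : α ≤ β) :
    ∃ (c : ℤ) (n : ℕ), n * δ ≤ β - α ∧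
      Icc α β ⊆ (Icc α (c * δ) ∪ Icc (c * δ + n * δ) β) ∪ Ioc (c * δ) (c * δ + n * δ) ∧
      volume.real (Icc α (c * δ) ∪ Icc (c * δ + n * δ) β) ≤ δ := by
  set c := ⌈α / δ⌉
  set n := ⌊(β - α) / δ⌋₊
  have hc : α ≤ c * δ := (div_le_iff₀ hδ).1 (Int.le_ceil _)
  have hc' : c * δ - α ≤ δ := by
    have := (lt_div_iff₀ hδ).1 (sub_lt_iff_lt_add.2 (Int.ceil_lt_add_one (α / δ)))
    linarith
  have hn : n * δ ≤ β - α :=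
    (le_div_iff₀ hδ).1 (Nat.floor_le (div_nonneg (sub_nonneg.2 hαβ) hδ.le))
  have hn' : β - α - n * δ ≤ δ := by
    have := (div_lt_iff₀ hδ).1 (Nat.lt_floor_add_one ((β - α) / δ))
    linarith
  refine ⟨c, n, hn, ?_, ?_⟩
  · rintro x ⟨hxα, hxβ⟩
    rcases le_or_gt x (c * δ) with hx₁ | hx₁
    · exact Or.inl (Or.inl ⟨hxα, hx₁⟩)
    rcases le_or_gt (c * δ + n * δ) x with hx₂ | hx₂
    · exact Or.inl (Or.inr ⟨hx₂, hxβ⟩)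
    · exact Or.inr ⟨hx₁, hx₂.le⟩
  · refine (measureReal_union_le _ _).trans ?_
    rw [Real.volume_real_Icc_of_le hc, Real.volume_real_Icc]
    rcases le_total (β - (c * δ + n * δ)) 0 with hend | hend
    · rwa [max_eq_right hend, add_zero]
    · rw [max_eq_left hend]
      linarith

lemma measureReal_Icc_inter_le_of_cells (hδ : 0 < δ)
    (hB : ∀ c : ℤ, volume.real (Ioc (c * δ) (c * δ + δ) ∩ B) ≤ δ * P) {α β : ℝ} (hαβ : α ≤ β) :
    volume.real (Icc α β ∩ B) ≤ (β - α) * P + δ := by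
  have hP : 0 ≤ P := (mul_nonneg_iff_of_pos_left hδ).1 (measureReal_nonneg.trans (hB 0))
  obtain ⟨c, n, hn, hcover, hends⟩ := exists_grid_Icc_subset hδ hαβ
  set ends := Icc α (c * δ) ∪ Icc (c * δ + n * δ) β
  set middle := Ioc (c * δ) (c * δ + n * δ)
  have hfinite : volume (ends ∪ middle ∩ B) ≠ ⊤ :=
    measure_union_ne_top (measure_union_ne_top measure_Icc_lt_top.ne measure_Icc_lt_top.ne)
      (measure_ne_top_of_subset inter_subset_left measure_Ioc_lt_top.ne)
  calc volume.real (Icc α β ∩ B) ≤ volume.real (ends ∪ middle ∩ B) :=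
        measureReal_mono (fun x ⟨hx, hxB⟩ => (hcover hx).imp_right fun hx' => ⟨hx', hxB⟩) hfinite
    _ ≤ volume.real ends + volume.real (middle ∩ B) := measureReal_union_le _ _
    _ ≤ δ + n * δ * P := add_le_add hends (measureReal_inter_le_of_cells hδ.le hB c n)
    _ ≤ δ + (β - α) * P := by gcongr
    _ = (β - α) * P + δ := add_comm _ _

lemma measureReal_inter_le_of_ordConnected (hA : Bornology.IsBounded A) (hA' : A.OrdConnected)
    (hδ : 0 < δ) (hB : ∀ c : ℤ, volume.real (Ioc (c * δ) (c * δ + δ) ∩ B) ≤ δ * P) :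
    volume.real (A ∩ B) ≤ volume.real A * P + δ := by
  have hP : 0 ≤ P := (mul_nonneg_iff_of_pos_left hδ).1 (measureReal_nonneg.trans (hB 0))
  rcases A.eq_empty_or_nonempty with rfl | hne
  · simpa using hδ.le
  have hle : sInf A ≤ sSup A := csInf_le_csSup hne hA.bddBelow hA.bddAbove
  have hlength : sSup A - sInf A ≤ volume.real A := by
    rw [← Real.volume_real_Ioo_of_le hle]
    exact measureReal_mono (IsConnected.Ioo_csInf_csSup_subset ⟨hne, hA'.isPreconnected⟩
      hA.bddBelow hA.bddAbove) hA.measure_lt_top.ne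
  calc volume.real (A ∩ B) ≤ volume.real (Icc (sInf A) (sSup A) ∩ B) :=
        measureReal_mono (inter_subset_inter_left B hA.subset_Icc_sInf_sSup)
          (measure_ne_top_of_subset inter_subset_left measure_Icc_lt_top.ne)
    _ ≤ (sSup A - sInf A) * P + δ := measureReal_Icc_inter_le_of_cells hδ hB hle
    _ ≤ volume.real A * P + δ := by gcongr

end Grid

section ResidueClasses

variable {h N r : ℕ}

/-- The number of `i` with `r + h * i < N`, that is, of elements of the residue class of `r` modulo
`h` in `{0, …, N - 1}` when `r < h`. -/
def residueCount (h N r : ℕ) : ℕ := (N - r) ⌈/⌉ h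

lemma lt_residueCount_iff (hh : 0 < h) {i : ℕ} : i < residueCount h N r ↔ r + h * i < N := by
  rw [residueCount, ← not_le, ceilDiv_le_iff_le_mul hh, not_le, Nat.lt_sub_iff_add_lt']

lemma div_le_residueCount (hr : r < h) : N / h ≤ residueCount h N r := by
  rw [residueCount, Nat.ceilDiv_eq_add_pred_div]
  exact Nat.div_le_div_right (by omega)

lemma sum_range_eq_sum_residueClasses {α : Type*} [AddCommMonoid α] (hh : 0 < h) (f : ℕ → α) :
    ∑ j ∈ Finset.range N, f j =
      ∑ r ∈ Finset.range h, ∑ i ∈ Finset.range (residueCount h N r), f (r + h * i) := by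
  rw [Finset.sum_sigma']
  refine Finset.sum_nbij' (fun j => ⟨j % h, j / h⟩) (fun p => p.1 + h * p.2) ?_ ?_ ?_ ?_ ?_
  · intro j hj
    simpa [lt_residueCount_iff hh, Nat.mod_add_div, Nat.mod_lt _ hh] using hj
  · rintro ⟨r, i⟩ hp
    simp only [Finset.mem_sigma, Finset.mem_range, lt_residueCount_iff hh] at hp ⊢
    exact hp.2
  · intro j _
    exact Nat.mod_add_div j h
  · rintro ⟨r, i⟩ hp
    have hr : r < h := Finset.mem_range.1 (Finset.mem_sigma.1 hp).1
    simp [Nat.mod_eq_of_lt hr, Nat.add_mul_div_left _ _ hh, Nat.div_eq_of_lt hr]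
  · intro j _
    rw [Nat.mod_add_div]

lemma sum_residueCount (hh : 0 < h) :
    ∑ r ∈ Finset.range h, (residueCount h N r : ℝ) = N := by
  simpa using (sum_range_eq_sum_residueClasses (N := N) hh fun _ => (1 : ℝ)).symm

lemma sum_sqrt_residueCount_le (hh : 0 < h) :
    ∑ r ∈ Finset.range h, √(residueCount h N r : ℝ) ≤ √((h : ℝ) * N) := by
  simpa [sum_residueCount hh] using Real.sum_sqrt_mul_sqrt_le (Finset.range h)
    (f := fun _ => 1) (g := fun r => (residueCount h N r : ℝ)) (by simp) (by simp)

end ResidueClasses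

section Discrepancy

variable {b h N K a : ℕ} {ε : ℝ}

lemma F_bseq_eq (hh : 0 < h) (x : ℝ) :
    F K N (a / (b : ℝ) ^ h) ((a + 1) / (b : ℝ) ^ h) (bseq b x) =
      |∑ r ∈ Finset.range h, (visitCount (b ^ h) a (residueCount h N r) ((b : ℝ) ^ (K + r) * x) -
        residueCount h N r / (b ^ h : ℕ))| := by
  have hexpected : ∑ r ∈ Finset.range h, (residueCount h N r : ℝ) / (b ^ h : ℕ) =
      ((a + 1) / (b : ℝ) ^ h - a / (b : ℝ) ^ h) * N := by
    rw [← Finset.sum_div, sum_residueCount hh]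
    push_cast
    ring
  have hcount : (((Finset.Ico K (K + N)).filter fun j =>
        a / (b : ℝ) ^ h ≤ bseq b x j ∧ bseq b x j < (a + 1) / (b : ℝ) ^ h).card : ℝ) =
      ∑ r ∈ Finset.range h,
        visitCount (b ^ h) a (residueCount h N r) ((b : ℝ) ^ (K + r) * x) := by
    rw [Finset.card_filter, Finset.sum_Ico_eq_sum_range, Nat.add_sub_cancel_left,
      sum_range_eq_sum_residueClasses hh]
    push_cast
    refine Finset.sum_congr rfl fun r _ => Finset.sum_congr rfl fun i _ => ?_
    have hpow : (b : ℝ) ^ (K + (r + h * i)) * x =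
        ((b : ℝ) ^ h) ^ i * ((b : ℝ) ^ (K + r) * x) := by
      ring
    simp [bseq, digitCell, indicator, hpow]
  rw [F, hcount, Finset.sum_sub_distrib, hexpected]

lemma setOf_lt_F_bseq_subset (hh : 0 < h) (hε : 0 ≤ ε) :
    {x | ε * √((h : ℝ) * N) < F K N (a / (b : ℝ) ^ h) ((a + 1) / (b : ℝ) ^ h) (bseq b x)} ⊆
      ⋃ r ∈ Finset.range h, {x | ε * √(residueCount h N r : ℝ) <
        |visitCount (b ^ h) a (residueCount h N r) ((b : ℝ) ^ (K + r) * x) -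
          residueCount h N r / (b ^ h : ℕ)|} := by
  intro x hx
  rw [mem_ofPred_eq, F_bseq_eq hh] at hx
  have hsum := calc ∑ r ∈ Finset.range h, ε * √(residueCount h N r : ℝ)
      = ε * ∑ r ∈ Finset.range h, √(residueCount h N r : ℝ) := by rw [Finset.mul_sum]
    _ ≤ ε * √((h : ℝ) * N) := by
        gcongr
        exact sum_sqrt_residueCount_le hh
    _ < _ := hx.trans_le (Finset.abs_sum_le_sum_abs _ _)
  simpa using Finset.exists_lt_of_sum_lt hsum

lemma measureReal_cell_lt_F_bseq_le (hh : 0 < h) (hN : h ≤ N) (hε : 0 ≤ ε) (M : ℕ)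
    (ha : a < b ^ h) (j₀ : ℕ) (u : ℝ) :
    volume.real (Ioc u (u + ((b : ℝ) ^ j₀)⁻¹) ∩ {x | ε * √((h : ℝ) * N) <
        F (M + j₀) N (a / (b : ℝ) ^ h) ((a + 1) / (b : ℝ) ^ h) (bseq b x)}) ≤
      ((b : ℝ) ^ j₀)⁻¹ *
        (2 * h * Real.exp (-ε ^ 2 / (2 / (b : ℝ) ^ h + 2 / 3 * ε / √((N / h : ℕ) : ℝ)))) := by
  have hb : (b : ℝ) ≠ 0 := by
    intro hb
    simp [Nat.cast_eq_zero.1 hb, hh.ne'] at ha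
  set δ := ((b : ℝ) ^ j₀)⁻¹
  set E := Real.exp (-ε ^ 2 / (2 / (b : ℝ) ^ h + 2 / 3 * ε / √((N / h : ℕ) : ℝ)))
  set bad : ℕ → Set ℝ := fun r => {x | ε * √(residueCount h N r : ℝ) <
    |visitCount (b ^ h) a (residueCount h N r) ((b : ℝ) ^ (M + j₀ + r) * x) -
      residueCount h N r / (b ^ h : ℕ)|}
  have hbad : ∀ r ∈ Finset.range h, volume.real (Ioc u (u + δ) ∩ bad r) ≤ δ * (2 * E) := by
    intro r hr
    have hdiv : 0 < N / h := Nat.div_pos hN hh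
    have hcount : N / h ≤ residueCount h N r := div_le_residueCount (Finset.mem_range.1 hr)
    have hscale : (b : ℝ) ^ (M + j₀ + r) * δ = ((b ^ (M + r) : ℕ) : ℤ) := by
      push_cast
      rw [add_right_comm, pow_add, mul_inv_cancel_right₀ (pow_ne_zero _ hb)]
    refine (measureReal_visitCount_deviation_le ha (hdiv.trans_le hcount) (pow_ne_zero _ hb)
      (by positivity) hscale hε u).trans ?_
    simp only [E, neg_div, Nat.cast_pow]
    gcongr
  calc _ ≤ volume.real (⋃ r ∈ Finset.range h, Ioc u (u + δ) ∩ bad r) := by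
        rw [← inter_iUnion₂]
        exact measureReal_mono (inter_subset_inter_right _ (setOf_lt_F_bseq_subset hh hε))
          (measure_ne_top_of_subset inter_subset_left measure_Ioc_lt_top.ne)
    _ ≤ ∑ r ∈ Finset.range h, volume.real (Ioc u (u + δ) ∩ bad r) :=
        measureReal_biUnion_finset_le _ _
    _ ≤ ∑ r ∈ Finset.range h, δ * (2 * E) := Finset.sum_le_sum hbad
    _ = δ * (2 * h * E) := by
        rw [Finset.sum_const, Finset.card_range, nsmul_eq_mul]
        ring

theorem stmt4_general (b h N : ℕ) (hh : 1 ≤ h) (hN : h ≤ N) (ε : ℝ) (hε : 0 ≤ ε)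
    (M a : ℕ) (ha : a < b ^ h) (A : Set ℝ) (hA : Bornology.IsBounded A) (hA' : A.OrdConnected)
    (j₀ : ℕ) :
    volume {x ∈ A | ε * √((h : ℝ) * N) <
        F (M + j₀) N ((a : ℝ) / (b : ℝ) ^ h) (((a : ℝ) + 1) / (b : ℝ) ^ h) (bseq b x)} ≤
      ENNReal.ofReal ((volume A).toReal * 2 * h *
          Real.exp (-ε ^ 2 / (2 / (b : ℝ) ^ h + 2 / 3 * ε / √((N / h : ℕ) : ℝ))) +
        ((b : ℝ) ^ j₀)⁻¹) := by
  have hb : 0 < b := by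
    by_contra! hb
    simp [Nat.le_zero.1 hb, Nat.one_le_iff_ne_zero.1 hh] at ha
  have htail := measureReal_inter_le_of_ordConnected hA hA' (by positivity)
    fun c : ℤ => measureReal_cell_lt_F_bseq_le hh hN hε M ha j₀ (c * ((b : ℝ) ^ j₀)⁻¹)
  rw [ENNReal.le_ofReal_iff_toReal_le (hA.subset (sep_subset _ _)).measure_lt_top.ne
    (by positivity)]
  exact htail.trans_eq (by rw [measureReal_def]; ring)

end Discrepancy

section Constants

variable {b h : ℕ}

-- `263` is the least integer above `max h ^ 5 / 2 ^ (h - 1)`, which is attained at `h = 7`.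
lemma succ_pow_five_le (k : ℕ) : (k + 1) ^ 5 ≤ 263 * 2 ^ k := by
  rcases lt_or_ge k 8 with hk | hk
  · interval_cases k <;> norm_num
  induction k, hk using Nat.le_induction with
  | base => norm_num
  | succ k hk ih =>
    have hratio : (k + 1 + 1) ^ 5 ≤ 2 * (k + 1) ^ 5 := by
      obtain ⟨m, rfl⟩ := Nat.exists_eq_add_of_le hk
      ring_nf
      nlinarith [Nat.zero_le (m ^ 2), Nat.zero_le (m ^ 3), Nat.zero_le (m ^ 4), Nat.zero_le (m ^ 5)]
    calc (k + 1 + 1) ^ 5 ≤ 2 * (k + 1) ^ 5 := hratio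
      _ ≤ 2 * (263 * 2 ^ k) := by gcongr
      _ = 263 * 2 ^ (k + 1) := by ring

lemma mul_pow_five_le (hb : 2 ≤ b) (hh : 1 ≤ h) : b * h ^ 5 ≤ 263 * b ^ h := by
  obtain ⟨k, rfl⟩ := Nat.exists_eq_add_of_le' hh
  calc b * (k + 1) ^ 5 ≤ b * (263 * 2 ^ k) := by
        gcongr
        exact succ_pow_five_le k
    _ ≤ b * (263 * b ^ k) := by gcongr
    _ = 263 * b ^ (k + 1) := by ring

lemma neg_sq_div_le_of_le {ε y : ℝ} (hb : 2 ≤ b) (hh : 1 ≤ h) (hy : 0 ≤ y)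
    (hcrit : y ≤ 1 / ((b : ℝ) * (h : ℝ) ^ 5)) :
    -ε ^ 2 / (2 / (b : ℝ) ^ h + y) ≤ -ε ^ 2 * (b : ℝ) * (h : ℝ) ^ 5 / 529 := by
  set D := (b : ℝ) * (h : ℝ) ^ 5 with hD
  have hD0 : 0 < D := by positivity
  have hvariance : 2 / (b : ℝ) ^ h ≤ 526 / D := by
    rw [div_le_div_iff₀ (by positivity) hD0]
    have : D ≤ 263 * (b : ℝ) ^ h := by
      rw [hD]
      exact_mod_cast mul_pow_five_le hb hh
    linarith
  have hdenom : 2 / (b : ℝ) ^ h + y ≤ 529 / D := calc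
    2 / (b : ℝ) ^ h + y ≤ 526 / D + 1 / D := add_le_add hvariance hcrit
    _ = 527 / D := by ring
    _ ≤ 529 / D := by gcongr; norm_num
  calc -ε ^ 2 / (2 / (b : ℝ) ^ h + y) ≤ -ε ^ 2 / (529 / D) := by
        rw [neg_div, neg_div]
        gcongr
    _ = -ε ^ 2 * b * h ^ 5 / 529 := by
        rw [div_div_eq_mul_div, hD, mul_assoc]

end Constants

theorem stmt4 (b h N : ℕ) (hb : 2 ≤ b) (hh : 1 ≤ h) (hN : h ≤ N)
    (ε : ℝ) (hε : 0 < ε)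
    (hcrit : 2 / 3 * ε / Real.sqrt ((N / h : ℕ) : ℝ) ≤ 1 / ((b : ℝ) * (h : ℝ) ^ 5))
    (M a : ℕ) (ha : a < b ^ h)
    (A : Set ℝ) (hA : A ⊆ Set.Icc (0 : ℝ) 1) (hA' : A.OrdConnected)
    (j₀ : ℕ) (hj₀ : 1 ≤ j₀) :
    MeasureTheory.volume {x ∈ A |
        ε * Real.sqrt ((h : ℝ) * N) <
          F (M + j₀) N ((a : ℝ) / (b : ℝ) ^ h) (((a : ℝ) + 1) / (b : ℝ) ^ h) (bseq b x)} ≤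
      ENNReal.ofReal ((MeasureTheory.volume A).toReal * 2 * h *
          Real.exp (-ε ^ 2 * (b : ℝ) * (h : ℝ) ^ 5 / 529) +
        2 * ((b : ℝ) ^ j₀)⁻¹) := by
  have hexponent := neg_sq_div_le_of_le (ε := ε) hb hh (by positivity) hcrit
  refine (stmt4_general b h N hh hN ε hε.le M a ha A ((Metric.isBounded_Icc 0 1).subset hA) hA'
    j₀).trans (ENNReal.ofReal_le_ofReal ?_)
  gcongr ?_ * Real.exp ?_ + ?_
  exact le_mul_of_one_le_left (by positivity) one_le_two
end
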